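/- arXiv:1501.00327 — 4 statements merged into one kernel-verified Lean document; each statement's English description precedes it below -/
import Mathlib

section
/- The complement of the matroid M*(K_{3,3}) (realized as a set of points in PG(3,2)) is isomorphic to the direct sum U_{2,3} ⊕ U_{2,3}. -/
open Set Matroid
open scoped Classical

/-- `M` is the binary matroid on ground set `E` represented by the vectors `v`. -/
def IsBinRepOn {α W : Type*} [AddCommGroup W] [Module (ZMod 2) W]
    (M : Matroid α) (E : Set α) (v : α → W) : Prop :=
  M.E = E ∧ ∀ I ⊆ E, (M.Indep I ↔ LinearIndependent (ZMod 2) (fun x : I => v x))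

/-- Isomorphism of matroids: a bijection of ground sets preserving independence. -/
def MatroidIso {α β : Type*} (M : Matroid α) (N : Matroid β) : Prop :=
  ∃ e : M.E ≃ N.E, ∀ I : Set M.E,
    (M.Indep (Subtype.val '' I) ↔ N.Indep (Subtype.val '' (e '' I)))

/-- The incidence vector of an edge, over GF(2). -/
noncomputable def incVec {V : Type*} (e : Sym2 V) : V → ZMod 2 :=
  fun v => if v ∈ e then 1 else 0

/-- `M` is the cycle matroid of the graph `G`, i.e. the binary matroid on the edge set of `G`
represented by the GF(2) incidence vectors of the edges. -/
def IsCycleMatroidOf {V : Type*} (M : Matroid (Sym2 V)) (G : SimpleGraph V) : Prop :=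
  IsBinRepOn M G.edgeSet incVec

/-- Deletion of a set of elements from a matroid. -/
def mDel {α : Type*} (M : Matroid α) (D : Set α) : Matroid α := M ↾ (M.E \ D)

/-- Contraction of a set of elements in a matroid. -/
def mCon {α : Type*} (M : Matroid α) (C : Set α) : Matroid α := (mDel M✶ C)✶

/-- A circuit of a matroid: a minimal dependent set. -/
def mCircuit {α : Type*} (M : Matroid α) (C : Set α) : Prop :=
  C ⊆ M.E ∧ ¬ M.Indep C ∧ ∀ x ∈ C, M.Indep (C \ {x})

/-- A cocircuit of a matroid: a circuit of the dual. -/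
def mCocircuit {α : Type*} (M : Matroid α) (C : Set α) : Prop := mCircuit M✶ C

/-- The rank of a set in a matroid: the supremum of cardinalities of independent subsets. -/
noncomputable def mRk {α : Type*} (M : Matroid α) (X : Set α) : ℕ :=
  sSup (Set.ncard '' {I | I ⊆ X ∧ M.Indep I})

/-- A `k`-separation of a matroid. -/
def mKSep {α : Type*} (M : Matroid α) (k : ℕ) (X Y : Set α) : Prop :=
  Disjoint X Y ∧ X ∪ Y = M.E ∧ k ≤ X.ncard ∧ k ≤ Y.ncard ∧
    mRk M X + mRk M Y + 1 ≤ mRk M M.E + k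

/-- A matroid is `3`-connected if it has no 1- or 2-separations. -/
def mThreeConnected {α : Type*} (M : Matroid α) : Prop :=
  (∀ X Y, ¬ mKSep M 1 X Y) ∧ (∀ X Y, ¬ mKSep M 2 X Y)

/-- A matroid is internally 4-connected if it is 3-connected and
every 3-separation has a side of size exactly 3. -/
def mInternally4 {α : Type*} (M : Matroid α) : Prop :=
  mThreeConnected M ∧ ∀ X Y, mKSep M 3 X Y → min X.ncard Y.ncard = 3

/-- A matroid is binary if it is representable over GF(2). -/
def mBinary {α : Type*} (M : Matroid α) : Prop :=
  ∃ (n : ℕ) (v : α → (Fin n → ZMod 2)), IsBinRepOn M M.E v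

/-- `M` is the uniform matroid of rank `r` on all of `α`. -/
def mUniformOf {α : Type*} (M : Matroid α) (r : ℕ) : Prop :=
  M.E = univ ∧ ∀ I : Set α, (M.Indep I ↔ I.ncard ≤ r)

/-- The points of the binary projective space of rank 4, `PG(3,2)`. -/
abbrev PGpt (n : ℕ) := {v : Fin n → ZMod 2 // v ≠ 0}

/-- The quartic Möbius ladder on `2n+1` vertices. -/
def qml (n : ℕ) : SimpleGraph (ZMod (2 * n + 1)) :=
  SimpleGraph.circulantGraph {1, (n : ZMod (2 * n + 1))}

/-- The cubic Möbius ladder on `2n` vertices. -/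
def cml (n : ℕ) : SimpleGraph (ZMod (2 * n)) :=
  SimpleGraph.circulantGraph {1, (n : ZMod (2 * n))}
theorem indep_crit {ι α W : Type*} [AddCommGroup W] [Module (ZMod 2) W] (φ : ι → α)
    (hφ : Function.Injective φ) (v : α → W) (I : Set ι) :
    LinearIndependent (ZMod 2) (fun x : (φ '' I : Set α) => v x) ↔
      ∀ S : Finset ι, (↑S : Set ι) ⊆ I → ∑ i ∈ S, v (φ i) = 0 → S = ∅ := by
  have h1 : LinearIndependent (ZMod 2) (fun x : (φ '' I : Set α) => v x) ↔
      LinearIndependent (ZMod 2) (fun x : I => v (φ x)) := by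
    rw [← linearIndependent_equiv (Equiv.Set.image φ I hφ)]
    rfl
  rw [h1]
  change LinearIndepOn (ZMod 2) (fun i => v (φ i)) I ↔ _
  rw [linearIndepOn_iff']
  constructor
  · intro h S hS h0
    by_contra hne
    obtain ⟨i, hi⟩ := Finset.nonempty_iff_ne_empty.mpr hne
    have := h S (fun _ => 1) hS (by simpa using h0) i hi
    simp at this
  · intro h S g hS h0 i hi
    by_contra hne
    have key : ∀ z : ZMod 2, z ≠ 0 → z = 1 := by decide
    have := h (S.filter (fun i => g i ≠ 0))
      (fun x hx => hS (by simpa using (Finset.mem_filter.mp hx).1))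
      (by
        rw [Finset.sum_filter]
        refine Eq.trans ?_ h0
        refine Finset.sum_congr rfl fun j _ => ?_
        split_ifs with hj
        · rw [key _ hj, one_smul]
        · push Not at hj
          rw [hj, zero_smul])
    have h2 : i ∈ S.filter (fun i => g i ≠ 0) := Finset.mem_filter.mpr ⟨hi, hne⟩
    rw [this] at h2
    simp at h2

theorem iso_of_param {α β γ : Type*} (M : Matroid α) (N : Matroid β) (G : γ → α) (K : γ → β)
    (hG : Function.Injective G) (hK : Function.Injective K) (rG : Set.range G = M.E)
    (rK : Set.range K = N.E) (h : ∀ I : Set γ, M.Indep (G '' I) ↔ N.Indep (K '' I)) :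
    MatroidIso M N := by
  let eG : γ ≃ M.E := (Equiv.ofInjective G hG).trans (Equiv.setCongr rG)
  let eK : γ ≃ N.E := (Equiv.ofInjective K hK).trans (Equiv.setCongr rK)
  have hGv : ∀ x, (eG x : α) = G x := fun x => rfl
  have hKv : ∀ x, (eK x : β) = K x := fun x => rfl
  refine ⟨eG.symm.trans eK, fun I => ?_⟩
  obtain ⟨J, rfl⟩ : ∃ J : Set γ, I = eG '' J := ⟨eG.symm '' I, by simp⟩
  have h1 : Subtype.val '' (eG '' J) = G '' J := by
    rw [Set.image_image]
    rfl
  have h2 : Subtype.val '' ((eG.symm.trans eK) '' (eG '' J)) = K '' J := by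
    rw [Set.image_image, Set.image_image]
    refine Set.image_congr fun x _ => ?_
    simp [hKv]
  rw [h1, h2]
  exact h J

/-- edges of K33 -/
def ed (p : Fin 3 × Fin 3) : Sym2 (Fin 3 ⊕ Fin 3) := s(Sum.inl p.1, Sum.inr p.2)

theorem ed_inj : Function.Injective ed := by
  rintro ⟨a, b⟩ ⟨c, d⟩ h
  simpa [ed] using h

theorem ed_range : Set.range ed = (completeBipartiteGraph (Fin 3) (Fin 3)).edgeSet := by
  ext x
  induction x using Sym2.ind with
  | _ a b =>
    rcases a with a | a <;> rcases b with b | b <;> simp [ed]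

/-- concrete incidence vectors -/
def iv (p : Fin 3 × Fin 3) : Fin 3 ⊕ Fin 3 → ZMod 2 :=
  fun v => if v = Sum.inl p.1 ∨ v = Sum.inr p.2 then 1 else 0

theorem incVec_ed (p) : incVec (ed p) = iv p := by
  funext v
  simp only [incVec, ed, iv, Sym2.mem_iff]

/-- coordinates of M*(K33) -/
def f0 (p : Fin 3 × Fin 3) : Fin 4 → ZMod 2 :=
  ![if p.1 ≠ 1 ∧ p.2 ≠ 1 then 1 else 0, if p.1 ≠ 1 ∧ p.2 ≠ 0 then 1 else 0,
    if p.1 ≠ 0 ∧ p.2 ≠ 1 then 1 else 0, if p.1 ≠ 0 ∧ p.2 ≠ 0 then 1 else 0]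

/-- the complementary points -/
def g0 : Fin 3 ⊕ Fin 3 → Fin 4 → ZMod 2
  | Sum.inl k => f0 (k, 0) + f0 (k + 1, 1) + f0 (k + 2, 2)
  | Sum.inr k => f0 (k, 0) + f0 (k - 1, 1) + f0 (k - 2, 2)

theorem cover : ∀ c : Fin 4 → ZMod 2, c ≠ 0 → (∃ p, f0 p = c) ∨ (∃ q, g0 q = c) := by
  decide

theorem g0_ne : ∀ q, g0 q ≠ 0 := by decide
theorem g0_inj : ∀ q q', g0 q = g0 q' → q = q' := by decide
theorem f0_ne_g0 : ∀ p q, f0 p ≠ g0 q := by decide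

theorem g0_sum : ∀ S : Finset (Fin 3 ⊕ Fin 3), ∑ i ∈ S, g0 i = 0 → S ≠ ∅ →
    (∀ i, Sum.inl i ∈ S) ∨ (∀ i, Sum.inr i ∈ S) := by
  decide +kernel

theorem g0_l : ∑ i : Fin 3, g0 (Sum.inl i) = 0 := by decide
theorem g0_r : ∑ i : Fin 3, g0 (Sum.inr i) = 0 := by decide

/-- a spanning tree -/
def tree : Finset (Fin 3 × Fin 3) := Finset.univ.filter fun p => p.1 = 2 ∨ p.2 = 2

theorem tree_ind : ∀ S ∈ tree.powerset, ∑ i ∈ S, iv i = 0 → S = ∅ := by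
  decide +kernel

theorem tree_circ : ∀ p : Fin 3 × Fin 3, p ∉ tree →
    ∑ i ∈ ({p, (p.1, 2), (2, p.2), (2, 2)} : Finset (Fin 3 × Fin 3)), iv i = 0 := by
  decide

theorem sub_tree : ∀ p : Fin 3 × Fin 3, ∀ x ∈ ({p, (p.1, 2), (2, p.2), (2, 2)} : Finset (Fin 3 × Fin 3)),
    x = p ∨ x ∈ tree := by
  decide

theorem f0_span : ∀ p, f0 p = f0 p 0 • f0 (0,0) + f0 p 1 • f0 (0,1) + f0 p 2 • f0 (1,0)
    + f0 p 3 • f0 (1,1) := by decide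

theorem N_indep (N : Matroid (Sym2 (Fin 3 ⊕ Fin 3)))
    (hN : IsCycleMatroidOf N (completeBipartiteGraph (Fin 3) (Fin 3))) (I : Set (Fin 3 × Fin 3)) :
    N.Indep (ed '' I) ↔
      ∀ S : Finset (Fin 3 × Fin 3), (↑S : Set (Fin 3 × Fin 3)) ⊆ I → ∑ i ∈ S, iv i = 0 → S = ∅ := by
  rw [hN.2 _ (by rw [← ed_range]; exact Set.image_subset_range _ _), indep_crit ed ed_inj]
  simp only [incVec_ed]

theorem tree_base (N : Matroid (Sym2 (Fin 3 ⊕ Fin 3)))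
    (hN : IsCycleMatroidOf N (completeBipartiteGraph (Fin 3) (Fin 3))) :
    N.IsBase (ed '' (↑tree : Set (Fin 3 × Fin 3))) := by
  apply Matroid.Indep.isBase_of_forall_insert
  · rw [N_indep N hN]
    intro S hS h0
    exact tree_ind S (Finset.mem_powerset.mpr (by exact_mod_cast hS)) h0
  · rintro x ⟨hx, hx'⟩ hI
    rw [hN.1, ← ed_range] at hx
    obtain ⟨p, rfl⟩ := hx
    have hp : p ∉ tree := fun h => hx' ⟨p, h, rfl⟩
    rw [← Set.image_insert_eq, N_indep N hN] at hI
    have := hI _ (fun x hx => by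
      have := sub_tree p x hx
      simpa using this) (tree_circ p hp)
    simp at this

/-- The star at a vertex meets every base. -/
theorem star_dep (N : Matroid (Sym2 (Fin 3 ⊕ Fin 3)))
    (hN : IsCycleMatroidOf N (completeBipartiteGraph (Fin 3) (Fin 3))) (w : Fin 3 ⊕ Fin 3)
    (p : Fin 3 × Fin 3) (hp : iv p w ≠ 0) :
    ¬ N✶.Indep (ed '' {q | iv q w ≠ 0}) := by
  rw [Matroid.dual_indep_iff_exists']
  rintro ⟨-, B, hB, hd⟩
  obtain ⟨J, rfl⟩ : ∃ J, ed '' J = B := by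
    have := hB.subset_ground
    rw [hN.1, ← ed_range] at this
    exact Set.subset_range_iff_exists_image_eq.mp this
  have hJ : ∀ q ∈ J, iv q w = 0 := by
    intro q hq
    by_contra h
    exact Set.disjoint_left.mp hd ⟨q, h, rfl⟩ ⟨q, hq, rfl⟩
  have hpJ : p ∉ J := fun h => hp (hJ p h)
  have hins : N.Indep (insert (ed p) (ed '' J)) := by
    rw [← Set.image_insert_eq, N_indep N hN]
    intro S hS h0
    have hpS : p ∉ S := by
      intro hpS
      have h1 := congrFun h0 w
      rw [Finset.sum_apply, Finset.sum_eq_single p] at h1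
      · exact hp h1
      · intro b hb hbp
        exact hJ b ((hS hb).resolve_left hbp)
      · intro h
        exact absurd hpS h
    refine (N_indep N hN J).mp hB.indep S (fun x hx => ?_) h0
    exact (hS hx).resolve_left (fun h => hpS (h ▸ hx))
  have := hB.eq_of_subset_indep hins (Set.subset_insert _ _)
  have h2 : ed p ∈ ed '' J := by
    rw [this]
    exact Set.mem_insert _ _
  obtain ⟨q, hq, hqp⟩ := h2
  exact hpJ (ed_inj hqp ▸ hq)

theorem three_sum {ι : Type*} (f : ι → Fin 4 → ZMod 2) (hf : Function.Injective f)
    (hz : ∀ i, f i ≠ 0) (a b c : ι) (hab : a ≠ b) (hac : a ≠ c) (hbc : b ≠ c)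
    (h : ¬ ∀ S : Finset ι, (↑S : Set ι) ⊆ {a, b, c} → ∑ i ∈ S, f i = 0 → S = ∅) :
    f a + f b + f c = 0 := by
  have two : ∀ x y : Fin 4 → ZMod 2, x + y = 0 → x = y := by decide +kernel
  by_contra hne
  apply h
  intro S hS h0
  by_contra hS0
  have hS' : S ⊆ {a, b, c} := by
    intro x hx
    simpa using hS hx
  have hSe : S = ({a, b, c} : Finset ι).filter (· ∈ S) := by
    ext x
    simp only [Finset.mem_filter]
    exact ⟨fun h => ⟨hS' h, h⟩, fun h => h.2⟩
  have habc : a ∉ ({b, c} : Finset ι) := by simp [hab, hac]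
  have hbc' : b ∉ ({c} : Finset ι) := by simp [hbc]
  have h1 : (if a ∈ S then f a else 0) + ((if b ∈ S then f b else 0) + (if c ∈ S then f c else 0))
      = 0 := by
    refine Eq.trans ?_ h0
    rw [hSe, Finset.sum_filter, Finset.sum_insert habc, Finset.sum_insert hbc',
      Finset.sum_singleton, ← hSe]
  by_cases ha : a ∈ S <;> by_cases hb : b ∈ S <;> by_cases hc : c ∈ S <;>
    simp only [ha, hb, hc, if_true, if_false, add_zero, zero_add] at h1
  · exact hne (by rw [add_assoc]; exact h1)
  · exact hab (hf (two _ _ h1))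
  · exact hac (hf (two _ _ h1))
  · exact hz _ h1
  · exact hbc (hf (two _ _ h1))
  · exact hz _ h1
  · exact hz _ h1
  · apply hS0
    rw [hSe]
    ext x
    simp only [Finset.mem_filter, Finset.mem_insert, Finset.mem_singleton, Finset.notMem_empty,
      iff_false]
    rintro ⟨rfl | rfl | rfl, h⟩ <;> contradiction

theorem star_l : ∀ i : Fin 3, ∀ q, iv q (Sum.inl i) ≠ 0 ↔ q = (i, 0) ∨ q = (i, 1) ∨ q = (i, 2) := by
  decide
theorem star_r : ∀ i : Fin 3, ∀ q, iv q (Sum.inr i) ≠ 0 ↔ q = (0, i) ∨ q = (1, i) ∨ q = (2, i) := by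
  decide

/-- The linear map with prescribed values at the standard basis. -/
def lin (f : Fin 3 × Fin 3 → Fin 4 → ZMod 2) : (Fin 4 → ZMod 2) →ₗ[ZMod 2] (Fin 4 → ZMod 2) :=
  Fintype.linearCombination (ZMod 2) ![f (0,0), f (0,1), f (1,0), f (1,1)]

theorem lin_apply (f : Fin 3 × Fin 3 → Fin 4 → ZMod 2) (c) :
    lin f c = c 0 • f (0,0) + c 1 • f (0,1) + c 2 • f (1,0) + c 3 • f (1,1) := by
  simp [lin, Fintype.linearCombination_apply, Fin.sum_univ_four]

/-- index set of basis -/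
def bs (c : Fin 4 → ZMod 2) : Finset (Fin 3 × Fin 3) :=
  ({(0,0), (0,1), (1,0), (1,1)} : Finset (Fin 3 × Fin 3)).filter fun p => c
    (if p = (0,0) then 0 else if p = (0,1) then 1 else if p = (1,0) then 2 else 3) ≠ 0

theorem bs_zero : ∀ c, bs c = ∅ → c = 0 := by decide +kernel

theorem bs_tree : ∀ c, ∀ p ∈ bs c, p ∉ tree := by decide +kernel

theorem bs_sum (f : Fin 3 × Fin 3 → Fin 4 → ZMod 2) (c) : ∑ p ∈ bs c, f p = lin f c := by
  have key : ∀ (z : ZMod 2) (x : Fin 4 → ZMod 2), (if z ≠ 0 then x else 0) = z • x := by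
    decide +kernel
  rw [bs, Finset.sum_filter, lin_apply, Finset.sum_insert (by decide), Finset.sum_insert (by decide),
    Finset.sum_insert (by decide), Finset.sum_singleton]
  simp only [key]
  simp [add_assoc]

theorem f_eq (f : Fin 3 × Fin 3 → Fin 4 → ZMod 2)
    (hr : ∀ i, f (i,0) + f (i,1) + f (i,2) = 0) (hc : ∀ i, f (0,i) + f (1,i) + f (2,i) = 0) :
    ∀ p, f p = lin f (f0 p) := by
  have three : ∀ x y z : Fin 4 → ZMod 2, x + y + z = 0 → z = x + y := by
    intro x y z h
    funext i
    have := congrFun h i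
    simp only [Pi.add_apply, Pi.zero_apply] at this ⊢
    generalize x i = a at *
    generalize y i = b at *
    generalize z i = c at *
    revert a b c
    decide
  have e1 := three _ _ _ (hr 0)
  have e2 := three _ _ _ (hr 1)
  have e3 := three _ _ _ (hc 0)
  have e4 := three _ _ _ (hc 1)
  have e5 := three _ _ _ (hr 2)
  rintro ⟨i, j⟩
  rw [lin_apply]
  fin_cases i <;> fin_cases j <;> simp [f0, e1, e2, e3, e4, e5] <;> abel

/-- The complement of `M*(K_{3,3})`, realized as a set of points of `PG(3,2)`,
is isomorphic to `U_{2,3} ⊕ U_{2,3}`. -/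
theorem statement4 (PG : Matroid (PGpt 4)) (hPG : IsBinRepOn PG univ Subtype.val)
    (N : Matroid (Sym2 (Fin 3 ⊕ Fin 3)))
    (hN : IsCycleMatroidOf N (completeBipartiteGraph (Fin 3) (Fin 3)))
    (E : Set (PGpt 4)) (hE : MatroidIso N✶ (PG ↾ E))
    (U U' : Matroid (Fin 3)) (hU : mUniformOf U 2) (hU' : mUniformOf U' 2) :
    MatroidIso (PG ↾ Eᶜ) (U.sum U') := by
  obtain ⟨e, he⟩ := hE
  have hed : ∀ p, ed p ∈ N✶.E := fun p => by
    rw [Matroid.dual_ground, hN.1, ← ed_range]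
    exact ⟨p, rfl⟩
  let ee : Fin 3 × Fin 3 → N✶.E := fun p => ⟨ed p, hed p⟩
  have hee : Function.Injective ee := fun p q h => ed_inj (congrArg Subtype.val h)
  let F : Fin 3 × Fin 3 → PGpt 4 := fun p => (e (ee p)).val
  have hF : Function.Injective F := fun p q h => hee (e.injective (Subtype.ext h))
  have rF : Set.range F = E := by
    ext x
    constructor
    · rintro ⟨p, rfl⟩
      exact (e (ee p)).2
    · intro hx
      obtain ⟨⟨y, hy⟩, hyx⟩ := e.surjective ⟨x, hx⟩
      have hy' := hy
      rw [Matroid.dual_ground, hN.1, ← ed_range] at hy'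
      obtain ⟨p, rfl⟩ := hy'
      exact ⟨p, congrArg Subtype.val hyx⟩
  let f : Fin 3 × Fin 3 → Fin 4 → ZMod 2 := fun p => (F p).val
  have hf : Function.Injective f := fun p q h => hF (Subtype.ext h)
  have hfz : ∀ p, f p ≠ 0 := fun p => (F p).2
  have hind : ∀ I : Set (Fin 3 × Fin 3), N✶.Indep (ed '' I) ↔
      ∀ S : Finset (Fin 3 × Fin 3), (↑S : Set (Fin 3 × Fin 3)) ⊆ I → ∑ i ∈ S, f i = 0 → S = ∅ := by
    intro I
    have h1 := he (ee '' I)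
    have h2 : Subtype.val '' (ee '' I) = ed '' I := by
      rw [Set.image_image]
    have h3 : Subtype.val '' (e '' (ee '' I)) = F '' I := by
      rw [Set.image_image, Set.image_image]
    rw [h2, h3, Matroid.restrict_indep_iff, hPG.2 _ (Set.subset_univ _), indep_crit F hF] at h1
    rw [h1]
    refine and_iff_left ?_
    rw [← rF]
    exact Set.image_subset_range _ _
  have hr : ∀ i, f (i,0) + f (i,1) + f (i,2) = 0 := by
    intro i
    apply three_sum f hf hfz _ _ _ (by simp) (by simp) (by simp)
    rw [← hind]
    have h := star_dep N hN (Sum.inl i) (i, 0) ((star_l i _).mpr (Or.inl rfl))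
    simp only [star_l] at h
    exact h
  have hc : ∀ i, f (0,i) + f (1,i) + f (2,i) = 0 := by
    intro i
    apply three_sum f hf hfz _ _ _ (by simp) (by simp) (by simp)
    rw [← hind]
    have h := star_dep N hN (Sum.inr i) (0, i) ((star_r i _).mpr (Or.inl rfl))
    simp only [star_r] at h
    exact h
  have hfe := f_eq f hr hc
  have hbi : N✶.Indep (ed '' {p | p ∉ tree}) := by
    rw [Matroid.dual_indep_iff_exists']
    refine ⟨?_, _, tree_base N hN, ?_⟩
    · rintro _ ⟨p, -, rfl⟩
      exact hed p
    · rw [Set.disjoint_image_iff ed_inj, Set.disjoint_left]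
      exact fun p hp hp' => hp hp'
  have hLk : ∀ c, lin f c = 0 → c = 0 := by
    intro c hc0
    apply bs_zero
    apply (hind _).mp hbi _ (fun p hp => bs_tree c p hp)
    rw [bs_sum, hc0]
  have hLi : Function.Injective (lin f) := (injective_iff_map_eq_zero _).mpr hLk
  have hLs : Function.Surjective (lin f) := Finite.surjective_of_injective hLi
  let G : Fin 3 ⊕ Fin 3 → PGpt 4 := fun q => ⟨lin f (g0 q), fun h => g0_ne q (hLk _ h)⟩
  have hG : Function.Injective G := fun q q' h => g0_inj _ _ (hLi (congrArg Subtype.val h))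
  have rG : Set.range G = Eᶜ := by
    ext x
    rw [← rF]
    constructor
    · rintro ⟨q, rfl⟩ ⟨p, hp⟩
      have h := congrArg Subtype.val hp
      change f p = lin f (g0 q) at h
      rw [hfe p] at h
      exact f0_ne_g0 p q (hLi h)
    · intro hx
      obtain ⟨c, hcx⟩ := hLs x.1
      have hc0 : c ≠ 0 := by
        rintro rfl
        exact x.2 (by rw [← hcx, map_zero])
      rcases cover c hc0 with ⟨p, rfl⟩ | ⟨q, rfl⟩
      · exact absurd ⟨p, Subtype.ext (by change f p = _; rw [hfe p, hcx])⟩ hx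
      · exact ⟨q, Subtype.ext hcx⟩
  refine iso_of_param _ _ G id hG Function.injective_id rG ?_ ?_
  · rw [Matroid.sum_ground, hU.1, hU'.1, Set.range_id]
    ext x
    rcases x with x | x <;> simp
  · intro I
    have nc : ∀ J : Set (Fin 3), J.ncard ≤ 2 ↔ ¬ ∀ i, i ∈ J := by
      intro J
      constructor
      · intro h h'
        rw [Set.eq_univ_of_forall h', Set.ncard_univ] at h
        simp at h
      · intro h
        by_contra h2
        apply h
        have h3 : J = Set.univ := by
          apply Set.eq_of_subset_of_ncard_le (Set.subset_univ _)
          rw [Set.ncard_univ]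
          simp
          omega
        simp [h3]
    rw [Matroid.restrict_indep_iff, hPG.2 _ (Set.subset_univ _), indep_crit G hG, Set.image_id,
      Matroid.sum_indep_iff, hU.2, hU'.2, nc, nc, and_iff_left (by
        rw [← rG]
        exact Set.image_subset_range _ _)]
    have hs : ∀ S : Finset (Fin 3 ⊕ Fin 3), ∑ i ∈ S, (G i).val = lin f (∑ i ∈ S, g0 i) := by
      intro S
      rw [map_sum]
    simp only [hs]
    constructor
    · intro h
      constructor
      · intro hl
        have := h (Finset.univ.map Function.Embedding.inl) (by
          intro x hx
          simp at hx
          obtain ⟨i, rfl⟩ := hx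
          exact hl i) (by
          rw [Finset.sum_map]
          exact (congrArg _ g0_l).trans (map_zero _))
        simp at this
        exact Finset.univ_nonempty.ne_empty this
      · intro hl
        have := h (Finset.univ.map Function.Embedding.inr) (by
          intro x hx
          simp at hx
          obtain ⟨i, rfl⟩ := hx
          exact hl i) (by
          rw [Finset.sum_map]
          exact (congrArg _ g0_r).trans (map_zero _))
        simp at this
        exact Finset.univ_nonempty.ne_empty this
    · rintro ⟨h1, h2⟩ S hS h0
      by_contra hne
      rcases g0_sum S (hLk _ h0) hne with h | h
      · exact h1 fun i => hS (h i)
      · exact h2 fun i => hS (h i)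
end

section
/- A simple 3-connected graph G is internally 4-connected as a graph (i.e., for every partition (X,Y) of E(G) with 3 ≤ |X| ≤ |Y|, the number of vertices incident with edges in both X and Y is at least 3, with equality only if X is a triangle or the edge set of a degree-3 vertex) if and only if its cycle matroid M(G) is an internally 4-connected matroid. -/
open Set Matroid
open scoped Classical

/-- A graph is 3-connected if it has more than 3 vertices and deleting any fewer than 3
vertices leaves it connected. -/
def GraphThreeConnected {V : Type*} (G : SimpleGraph V) : Prop :=
  3 < Nat.card V ∧ ∀ S : Set V, S.ncard < 3 → (SimpleGraph.induce Sᶜ G).Connected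

/-- `V(X,Y)`: the vertices incident with edges in both `X` and `Y`. -/
def boundaryVerts {V : Type*} (X Y : Set (Sym2 V)) : Set V :=
  {v | (∃ e ∈ X, v ∈ e) ∧ (∃ e ∈ Y, v ∈ e)}

/-- `X` is the edge set of a triangle of `G`. -/
def IsTriangleEdgeSet {V : Type*} (G : SimpleGraph V) (X : Set (Sym2 V)) : Prop :=
  ∃ a b c : V, a ≠ b ∧ a ≠ c ∧ b ≠ c ∧ G.Adj a b ∧ G.Adj b c ∧ G.Adj a c ∧
    X = {s(a, b), s(b, c), s(a, c)}

/-- `X` is the set of edges incident with a vertex of degree 3. -/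
def IsDegree3Star {V : Type*} (G : SimpleGraph V) (X : Set (Sym2 V)) : Prop :=
  ∃ v : V, (G.neighborSet v).ncard = 3 ∧ X = {e ∈ G.edgeSet | v ∈ e}

/-- `G` is internally 4-connected as a graph: for every partition `(X,Y)` of the edge set with
`3 ≤ |X| ≤ |Y|`, we have `|V(X,Y)| ≥ 3`, with equality only if `X` is a triangle or the star
of a degree-3 vertex. -/
def GraphInternally4 {V : Type*} (G : SimpleGraph V) : Prop :=
  ∀ X Y : Set (Sym2 V), Disjoint X Y → X ∪ Y = G.edgeSet →
    3 ≤ X.ncard → X.ncard ≤ Y.ncard →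
    3 ≤ (boundaryVerts X Y).ncard ∧
      ((boundaryVerts X Y).ncard = 3 → IsTriangleEdgeSet G X ∨ IsDegree3Star G X)

section Aux

variable {V : Type*}

/-- component map of the spanning subgraph with edge set `X` -/
def ccmp (X : Set (Sym2 V)) (v : V) : (SimpleGraph.fromEdgeSet X).ConnectedComponent :=
  (SimpleGraph.fromEdgeSet X).connectedComponentMk v

lemma ccmp_eq {X : Set (Sym2 V)} {e : Sym2 V} (he : e ∈ X) {u v : V} (hu : u ∈ e) (hv : v ∈ e) :
    ccmp X u = ccmp X v := by
  by_cases h : u = v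
  · rw [h]
  · have : e = s(u, v) := (Sym2.mem_and_mem_iff h).1 ⟨hu, hv⟩
    subst this
    apply SimpleGraph.ConnectedComponent.sound
    apply SimpleGraph.Adj.reachable
    rw [SimpleGraph.fromEdgeSet_adj]
    exact ⟨he, h⟩

lemma sum_incVec [Fintype V] (f : V → ZMod 2) {u v : V} (h : u ≠ v) :
    ∑ w, incVec s(u, v) w * f w = f u + f v := by
  have : ∀ w, incVec s(u, v) w * f w = (if w = u then f w else 0) + (if w = v then f w else 0) := by
    intro w
    unfold incVec
    by_cases h1 : w = u
    · subst h1; simp [h]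
    · by_cases h2 : w = v
      · subst h2; simp [h1]
      · simp [h1, h2]
  simp [this, Finset.sum_add_distrib]

/-- The kernel of the incidence map is the space of functions on components. -/
lemma rank_add_comp [Fintype V] (X : Set (Sym2 V)) (hX : ∀ e ∈ X, ¬ e.IsDiag) :
    Module.finrank (ZMod 2) (Submodule.span (ZMod 2) (Set.range (fun e : X => incVec (e : Sym2 V))))
      + Nat.card (SimpleGraph.fromEdgeSet X).ConnectedComponent = Fintype.card V := by
  let A : Matrix X V (ZMod 2) := Matrix.of (fun e : X => incVec (e : Sym2 V))
  have h1 : A.rank = Module.finrank (ZMod 2)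
      (Submodule.span (ZMod 2) (Set.range (fun e : X => incVec (e : Sym2 V)))) := by
    rw [Matrix.rank_eq_finrank_span_row]; rfl
  have h2 := LinearMap.finrank_range_add_finrank_ker A.mulVecLin
  rw [← h1]
  have h3 : Module.finrank (ZMod 2) (V → ZMod 2) = Fintype.card V := by simp
  rw [h3] at h2
  have hker : ∀ f : V → ZMod 2, f ∈ LinearMap.ker A.mulVecLin ↔
      ∀ u v, (SimpleGraph.fromEdgeSet X).Adj u v → f u = f v := by
    intro f
    rw [LinearMap.mem_ker, Matrix.mulVecLin_apply, funext_iff]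
    constructor
    · intro h u v huv
      rw [SimpleGraph.fromEdgeSet_adj] at huv
      have := h ⟨s(u, v), huv.1⟩
      have h5 := sum_incVec f huv.2
      have h6 : f u + f v = 0 := by rw [← h5]; exact this
      exact CharTwo.add_eq_zero.1 h6
    · rintro h ⟨e, he⟩
      induction e with
      | _ u v =>
      have hne : u ≠ v := fun h => hX _ he h
      have h5 := sum_incVec f hne
      have : f u = f v := h u v (by rw [SimpleGraph.fromEdgeSet_adj]; exact ⟨he, hne⟩)
      rw [this, CharTwo.add_self_eq_zero] at h5
      exact h5
  have hr : ∀ f : V → ZMod 2, (∀ u v, (SimpleGraph.fromEdgeSet X).Adj u v → f u = f v) →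
      ∀ u v, (SimpleGraph.fromEdgeSet X).Reachable u v → f u = f v := by
    rintro f hf u v ⟨w⟩
    induction w with
    | nil => rfl
    | cons h _ ih => exact (hf _ _ h).trans ih
  let T : ((SimpleGraph.fromEdgeSet X).ConnectedComponent → ZMod 2) →ₗ[ZMod 2] (V → ZMod 2) :=
    LinearMap.funLeft (ZMod 2) (ZMod 2) (ccmp X)
  have hTi : Function.Injective T := by
    apply LinearMap.funLeft_injective_of_surjective
    intro c
    induction c using SimpleGraph.ConnectedComponent.ind with
    | _ v => exact ⟨v, rfl⟩
  have hTr : LinearMap.range T = LinearMap.ker A.mulVecLin := by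
    ext f
    rw [hker]
    constructor
    · rintro ⟨g, rfl⟩ u v huv
      show g (ccmp X u) = g (ccmp X v)
      congr 1
      exact SimpleGraph.ConnectedComponent.sound huv.reachable
    · intro hf
      refine ⟨fun c => c.lift f (fun u v w _ => hr f hf u v w.reachable), ?_⟩
      ext v
      rfl
  have h4 : Module.finrank (ZMod 2) (LinearMap.ker A.mulVecLin) =
      Nat.card (SimpleGraph.fromEdgeSet X).ConnectedComponent := by
    rw [← hTr, LinearMap.finrank_range_of_inj hTi, Module.finrank_pi, Nat.card_eq_fintype_card]
  rw [← h4]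
  exact h2

lemma mRk_eq [Fintype V] {G : SimpleGraph V} {M : Matroid (Sym2 V)} (hM : IsCycleMatroidOf M G)
    {X : Set (Sym2 V)} (hX : X ⊆ G.edgeSet) :
    mRk M X = Module.finrank (ZMod 2)
      (Submodule.span (ZMod 2) (Set.range (fun e : X => incVec (e : Sym2 V)))) := by
  unfold mRk
  apply IsGreatest.csSup_eq
  constructor
  · obtain ⟨I, hIX, -, hs, hI⟩ := exists_linearIndepOn_extension (K := ZMod 2)
      (v := (incVec : Sym2 V → V → ZMod 2)) (linearIndepOn_empty (ZMod 2) _) (Set.empty_subset X)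
    refine ⟨I, ⟨hIX, (hM.2 I (hIX.trans hX)).2 hI⟩, ?_⟩
    have := finrank_span_eq_card (b := fun x : I => (incVec (x : Sym2 V) : V → ZMod 2)) hI
    rw [← Nat.card_coe_set_eq, Nat.card_eq_fintype_card, ← this]
    have e1 : Set.range (fun x : I => (incVec (x : Sym2 V) : V → ZMod 2)) = incVec '' I := by
      ext; simp
    have e2 : Set.range (fun x : X => (incVec (x : Sym2 V) : V → ZMod 2)) = incVec '' X := by
      ext; simp
    have e3 : Submodule.span (ZMod 2) (Set.range (fun x : I => (incVec (x : Sym2 V) : V → ZMod 2)))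
        = Submodule.span (ZMod 2)
          (Set.range (fun x : X => (incVec (x : Sym2 V) : V → ZMod 2))) := by
      rw [e1, e2]
      apply le_antisymm
      · exact Submodule.span_mono (Set.image_mono hIX)
      · exact Submodule.span_le.2 hs
    rw [e3]
  · rintro _ ⟨I, ⟨hIX, hI⟩, rfl⟩
    have hli := (hM.2 I (hIX.trans hX)).1 hI
    have := finrank_span_eq_card hli
    rw [← Nat.card_coe_set_eq, Nat.card_eq_fintype_card, ← this]
    apply Submodule.finrank_mono
    apply Submodule.span_mono
    rintro _ ⟨e, rfl⟩
    exact ⟨⟨e, hIX e.2⟩, rfl⟩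

lemma mRk_add_comp [Fintype V] {G : SimpleGraph V} {M : Matroid (Sym2 V)}
    (hM : IsCycleMatroidOf M G) {X : Set (Sym2 V)} (hX : X ⊆ G.edgeSet) :
    mRk M X + Nat.card (SimpleGraph.fromEdgeSet X).ConnectedComponent = Fintype.card V := by
  rw [mRk_eq hM hX]
  exact rank_add_comp X fun e he => G.not_isDiag_of_mem_edgeSet (hX he)

lemma card_ge_of_fibers {C : Type*} [DecidableEq C] (B : Finset V) (p : V → C)
    (h2 : ∀ v ∈ B, 2 ≤ (B.filter (fun u => p u = p v)).card) :
    2 * (B.image p).card +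
      ((B.image p).filter (fun c => 3 ≤ (B.filter (fun u => p u = c)).card)).card ≤ B.card := by
  rw [Finset.card_eq_sum_card_image p B, Finset.card_filter, mul_comm, ← smul_eq_mul,
    ← Finset.sum_const, ← Finset.sum_add_distrib]
  apply Finset.sum_le_sum
  intro c hc
  obtain ⟨v, hv, rfl⟩ := Finset.mem_image.1 hc
  have := h2 v hv
  split_ifs <;> omega

lemma card_ge_of_fiber {C : Type*} [DecidableEq C] (B : Finset V) (p : V → C)
    (h2 : ∀ v ∈ B, 2 ≤ (B.filter (fun u => p u = p v)).card) (c : C) (hc : c ∈ B.image p) :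
    2 * (B.image p).card + (B.filter (fun u => p u = c)).card ≤ B.card + 2 := by
  rw [Finset.card_eq_sum_card_image p B, ← Finset.add_sum_erase _ _ hc,
    ← Finset.card_erase_add_one hc]
  have : ((B.image p).erase c).card * 2 ≤
      ∑ d ∈ (B.image p).erase c, (B.filter (fun u => p u = d)).card := by
    rw [← smul_eq_mul]
    apply Finset.card_nsmul_le_sum
    intro d hd
    obtain ⟨v, hv, rfl⟩ := Finset.mem_image.1 (Finset.mem_of_mem_erase hd)
    exact h2 v hv
  omega

/-- If no fiber is large on the `q` side. -/
lemma core_aux {C D : Type*} [DecidableEq C] [DecidableEq D] (B : Finset V) (p : V → C) (q : V → D)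
    (h2q : ∀ v ∈ B, 2 ≤ (B.filter (fun u => q u = q v)).card)
    (h3 : ∀ v ∈ B, 3 ≤ (B.filter (fun u => p u = p v)).card ∨
      3 ≤ (B.filter (fun u => q u = q v)).card)
    (hB : B.card ≤ (B.image p).card + (B.image q).card + 1)
    (hq : ∀ v ∈ B, ¬ 3 ≤ (B.filter (fun u => q u = q v)).card) : (B.image q).card ≤ 3 := by
  have hp : (B.image p).card * 3 ≤ B.card := by
    rw [Finset.card_eq_sum_card_image p B, ← smul_eq_mul]
    apply Finset.card_nsmul_le_sum
    intro d hd
    obtain ⟨v, hv, rfl⟩ := Finset.mem_image.1 hd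
    exact (h3 v hv).resolve_right (hq v hv)
  have := card_ge_of_fibers B q h2q
  omega

lemma core {C D : Type*} [DecidableEq C] [DecidableEq D] (B : Finset V) (p : V → C) (q : V → D)
    (h2p : ∀ v ∈ B, 2 ≤ (B.filter (fun u => p u = p v)).card)
    (h2q : ∀ v ∈ B, 2 ≤ (B.filter (fun u => q u = q v)).card)
    (h3 : ∀ v ∈ B, 3 ≤ (B.filter (fun u => p u = p v)).card ∨
      3 ≤ (B.filter (fun u => q u = q v)).card)
    (hB : B.card ≤ (B.image p).card + (B.image q).card + 1) :
    ((B.image p).card ≤ 3 ∧ ∀ v ∈ B, ¬ 3 ≤ (B.filter (fun u => p u = p v)).card) ∨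
    ((B.image q).card ≤ 3 ∧ ∀ v ∈ B, ¬ 3 ≤ (B.filter (fun u => q u = q v)).card) ∨
    B.card ≤ 3 ∨
    ∃ c d, (∀ v ∈ B, p v = c ∨ q v = d) ∧
      (B.filter (fun u => p u = c ∧ q u = d)).card ≤ 1 ∧
      (∃ v ∈ B, p v = c) ∧ (∃ v ∈ B, q v = d) := by
  by_cases hp : ∀ v ∈ B, ¬ 3 ≤ (B.filter (fun u => p u = p v)).card
  · exact Or.inl ⟨core_aux B q p h2p (fun v hv => (h3 v hv).symm) (by omega) hp, hp⟩
  by_cases hq : ∀ v ∈ B, ¬ 3 ≤ (B.filter (fun u => q u = q v)).card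
  · exact Or.inr (Or.inl ⟨core_aux B p q h2q h3 hB hq, hq⟩)
  push Not at hp hq
  obtain ⟨x, hx, hx3⟩ := hp
  obtain ⟨y, hy, hy3⟩ := hq
  have kp := card_ge_of_fibers B p h2p
  have kq := card_ge_of_fibers B q h2q
  set P := (B.image p).filter (fun c => 3 ≤ (B.filter (fun u => p u = c)).card) with hP
  set Q := (B.image q).filter (fun c => 3 ≤ (B.filter (fun u => q u = c)).card) with hQ
  have hxP : p x ∈ P := by
    rw [hP, Finset.mem_filter]; exact ⟨Finset.mem_image_of_mem _ hx, hx3⟩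
  have hyQ : q y ∈ Q := by
    rw [hQ, Finset.mem_filter]; exact ⟨Finset.mem_image_of_mem _ hy, hy3⟩
  have hP1 : 1 ≤ P.card := Finset.card_pos.2 ⟨_, hxP⟩
  have hQ1 : 1 ≤ Q.card := Finset.card_pos.2 ⟨_, hyQ⟩
  have fp := card_ge_of_fiber B p h2p (p x) (Finset.mem_image_of_mem _ hx)
  have fq := card_ge_of_fiber B q h2q (q y) (Finset.mem_image_of_mem _ hy)
  have hcov : ∀ v ∈ B, p v = p x ∨ q v = q y := by
    intro v hv
    rcases h3 v hv with h | h
    · left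
      have : p v ∈ P := by
        rw [hP, Finset.mem_filter]; exact ⟨Finset.mem_image_of_mem _ hv, h⟩
      exact Finset.card_le_one.1 (by omega) _ this _ hxP
    · right
      have : q v ∈ Q := by
        rw [hQ, Finset.mem_filter]; exact ⟨Finset.mem_image_of_mem _ hv, h⟩
      exact Finset.card_le_one.1 (by omega) _ this _ hyQ
  by_cases h3' : B.card ≤ 3
  · exact Or.inr (Or.inr (Or.inl h3'))
  refine Or.inr (Or.inr (Or.inr ⟨p x, q y, hcov, ?_, ⟨x, hx, rfl⟩, ⟨y, hy, rfl⟩⟩))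
  have hun := Finset.card_union_add_card_inter (B.filter (fun u => p u = p x))
    (B.filter (fun u => q u = q y))
  rw [← Finset.filter_or, ← Finset.filter_and, Finset.filter_true_of_mem hcov] at hun
  omega

lemma boundary_finite [Fintype V] (S : Set V) : S.Finite := S.toFinite

lemma exists_ends {G : SimpleGraph V} {e : Sym2 V} (he : e ∈ G.edgeSet) :
    ∃ a b, a ≠ b ∧ e = s(a, b) := by
  induction e with
  | _ a b => exact ⟨a, b, G.ne_of_adj he, rfl⟩

/-- One of the sides lies within the boundary, if the boundary is small. -/
lemma side_in_boundary [Fintype V] {G : SimpleGraph V} (h3 : GraphThreeConnected G)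
    {X Y : Set (Sym2 V)} (hU : X ∪ Y = G.edgeSet)
    (hb : (boundaryVerts X Y).ncard < 3) :
    (∀ e ∈ X, ∀ v ∈ e, v ∈ boundaryVerts X Y) ∨ (∀ e ∈ Y, ∀ v ∈ e, v ∈ boundaryVerts X Y) := by
  by_contra! hcon
  obtain ⟨⟨e, he, u, hue, huB⟩, ⟨f, hf, w, hwf, hwB⟩⟩ := hcon
  have hc := (h3.2 _ hb).preconnected ⟨u, huB⟩ ⟨w, hwB⟩
  have key : ∀ a b : ((boundaryVerts X Y)ᶜ : Set V),
      (SimpleGraph.induce (boundaryVerts X Y)ᶜ G).Walk a b →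
      (∃ e ∈ X, a.1 ∈ e) → (∃ e ∈ X, b.1 ∈ e) := by
    intro a b W
    induction W with
    | nil => exact id
    | @cons a b c h _ ih =>
      intro ha
      apply ih
      have hab : s(a.1, b.1) ∈ X ∪ Y := by rw [hU]; exact h
      rcases hab with hab | hab
      · exact ⟨_, hab, by simp⟩
      · exact absurd ⟨ha, _, hab, by simp⟩ a.2
  obtain ⟨W⟩ := hc
  exact hwB ⟨key _ _ W ⟨e, he, hue⟩, f, hf, hwf⟩

lemma two_of_in {G : SimpleGraph V} [Fintype V] {X : Set (Sym2 V)} (hX : X ⊆ G.edgeSet) {S : Set V}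
    (hS : ∀ e ∈ X, ∀ v ∈ e, v ∈ S) (hne : X.Nonempty) : 2 ≤ S.ncard := by
  obtain ⟨e, he⟩ := hne
  obtain ⟨a, b, hab, rfl⟩ := exists_ends (hX he)
  rw [← Set.ncard_pair hab]
  apply Set.ncard_le_ncard _ S.toFinite
  rintro x (rfl | rfl)
  · exact hS _ he _ (by simp)
  · exact hS _ he _ (by simp)

lemma three_of_in {G : SimpleGraph V} [Fintype V] {X : Set (Sym2 V)} (hX : X ⊆ G.edgeSet) {S : Set V}
    (hS : ∀ e ∈ X, ∀ v ∈ e, v ∈ S) (hne : X.Nontrivial) : 3 ≤ S.ncard := by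
  obtain ⟨e, he, f, hf, hef⟩ := hne
  obtain ⟨a, b, hab, rfl⟩ := exists_ends (hX he)
  by_contra! hcon
  have hsub : ({a, b} : Set V) ⊆ S := by
    rintro x (rfl | rfl)
    · exact hS _ he _ (by simp)
    · exact hS _ he _ (by simp)
  have hS2 : ({a, b} : Set V) = S :=
    Set.eq_of_subset_of_ncard_le hsub (by rw [Set.ncard_pair hab]; omega) S.toFinite
  obtain ⟨c, d, hcd, rfl⟩ := exists_ends (hX hf)
  have hc := hS _ hf c (by simp)
  have hd := hS _ hf d (by simp)
  rw [← hS2] at hc hd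
  simp only [Set.mem_insert_iff, Set.mem_singleton_iff] at hc hd
  apply hef
  rcases hc with rfl | rfl <;> rcases hd with rfl | rfl
  · exact absurd rfl hcd
  · rfl
  · exact Sym2.eq_swap
  · exact absurd rfl hcd

lemma boundary_two [Fintype V] {G : SimpleGraph V} (h3 : GraphThreeConnected G)
    {X Y : Set (Sym2 V)} (hU : X ∪ Y = G.edgeSet) (hX : X.Nonempty) (hY : Y.Nonempty) :
    2 ≤ (boundaryVerts X Y).ncard := by
  by_contra! hcon
  have hXs : X ⊆ G.edgeSet := hU ▸ Set.subset_union_left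
  have hYs : Y ⊆ G.edgeSet := hU ▸ Set.subset_union_right
  rcases side_in_boundary h3 hU (by omega) with h | h
  · have := two_of_in hXs h hX
    omega
  · have := two_of_in hYs h hY
    omega

lemma boundary_three [Fintype V] {G : SimpleGraph V} (h3 : GraphThreeConnected G)
    {X Y : Set (Sym2 V)} (hU : X ∪ Y = G.edgeSet) (hX : X.Nontrivial) (hY : Y.Nontrivial) :
    3 ≤ (boundaryVerts X Y).ncard := by
  by_contra! hcon
  have hXs : X ⊆ G.edgeSet := hU ▸ Set.subset_union_left
  have hYs : Y ⊆ G.edgeSet := hU ▸ Set.subset_union_right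
  rcases side_in_boundary h3 hU (by omega) with h | h
  · have := three_of_in hXs h hX
    omega
  · have := three_of_in hYs h hY
    omega

lemma deg_three [Fintype V] {G : SimpleGraph V} (h3 : GraphThreeConnected G) (v : V) :
    3 ≤ (G.neighborSet v).ncard := by
  by_contra! hcon
  have hc := h3.2 _ hcon
  have hvN : v ∉ G.neighborSet v := by simp
  obtain ⟨w, hw⟩ : ∃ w, w ∉ insert v (G.neighborSet v) := by
    by_contra! hall
    have h1 := Set.ncard_insert_le v (G.neighborSet v)
    rw [Set.eq_univ_of_forall hall, Set.ncard_univ] at h1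
    have := h3.1
    omega
  simp only [Set.mem_insert_iff, not_or] at hw
  obtain ⟨W⟩ := hc.preconnected ⟨v, hvN⟩ ⟨w, hw.2⟩
  cases W with
  | nil => exact hw.1 rfl
  | @cons _ b _ h _ => exact b.2 h

lemma star_ncard {G : SimpleGraph V} (v : V) :
    {e ∈ G.edgeSet | v ∈ e}.ncard = (G.neighborSet v).ncard := by
  have : {e ∈ G.edgeSet | v ∈ e} = (fun w => s(v, w)) '' G.neighborSet v := by
    ext e
    constructor
    · rintro ⟨he, hv⟩
      obtain ⟨w, rfl⟩ := Sym2.mem_iff_exists.1 hv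
      exact ⟨w, he, rfl⟩
    · rintro ⟨w, hw, rfl⟩
      exact ⟨hw, by simp⟩
  rw [this]
  apply Set.ncard_image_of_injective
  intro a b hab
  exact Sym2.congr_right.1 hab

lemma boundaryVerts_comm (X Y : Set (Sym2 V)) : boundaryVerts X Y = boundaryVerts Y X := by
  ext v; exact and_comm

lemma boundary_comp_subset {G : SimpleGraph V} {X Y : Set (Sym2 V)} (hU : X ∪ Y = G.edgeSet)
    (c : (SimpleGraph.fromEdgeSet X).ConnectedComponent) :
    boundaryVerts {e ∈ X | ∃ v ∈ e, ccmp X v = c} (G.edgeSet \ {e ∈ X | ∃ v ∈ e, ccmp X v = c}) ⊆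
      {u ∈ boundaryVerts X Y | ccmp X u = c} := by
  rintro u ⟨⟨e, ⟨he, v, hv, hvc⟩, hue⟩, f, ⟨hfE, hf⟩, huf⟩
  have huc : ccmp X u = c := (ccmp_eq he hue hv).trans hvc
  have hfX : f ∉ X := fun h => hf ⟨h, u, huf, huc⟩
  rw [← hU] at hfE
  exact ⟨⟨⟨e, he, hue⟩, f, hfE.resolve_left hfX, huf⟩, huc⟩

lemma fiber_two [Fintype V] {G : SimpleGraph V} (h3 : GraphThreeConnected G)
    {X Y : Set (Sym2 V)} (hD : Disjoint X Y) (hU : X ∪ Y = G.edgeSet) (hY : Y.Nonempty)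
    {e : Sym2 V} (he : e ∈ X) {v : V} (hv : v ∈ e) :
    2 ≤ {u ∈ boundaryVerts X Y | ccmp X u = ccmp X v}.ncard := by
  refine le_trans ?_ (Set.ncard_le_ncard (boundary_comp_subset hU (ccmp X v)) (Set.toFinite _))
  apply boundary_two h3
  · apply Set.union_sdiff_cancel
    exact fun f hf => hU ▸ Or.inl hf.1
  · exact ⟨e, he, v, hv, rfl⟩
  · obtain ⟨f, hf⟩ := hY
    exact ⟨f, hU ▸ Or.inr hf, fun h => Set.disjoint_left.1 hD h.1 hf⟩

lemma fiber_three [Fintype V] {G : SimpleGraph V} (h3 : GraphThreeConnected G)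
    {X Y : Set (Sym2 V)} (hD : Disjoint X Y) (hU : X ∪ Y = G.edgeSet) (hY : Y.Nontrivial)
    {e f : Sym2 V} (he : e ∈ X) (hf : f ∈ X) (hef : e ≠ f) {v w : V} (hv : v ∈ e) (hw : w ∈ f)
    (hvw : ccmp X w = ccmp X v) :
    3 ≤ {u ∈ boundaryVerts X Y | ccmp X u = ccmp X v}.ncard := by
  refine le_trans ?_ (Set.ncard_le_ncard (boundary_comp_subset hU (ccmp X v)) (Set.toFinite _))
  apply boundary_three h3
  · apply Set.union_sdiff_cancel
    exact fun f hf => hU ▸ Or.inl hf.1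
  · exact ⟨e, ⟨he, v, hv, rfl⟩, f, ⟨hf, w, hw, hvw⟩, hef⟩
  · apply hY.mono
    intro f hf
    exact ⟨hU ▸ Or.inr hf, fun h => Set.disjoint_left.1 hD h.1 hf⟩

lemma comp_le [Fintype V] {G : SimpleGraph V} (h3 : GraphThreeConnected G)
    {X Y : Set (Sym2 V)} (hD : Disjoint X Y) (hU : X ∪ Y = G.edgeSet) (hY : Y.Nonempty) :
    Nat.card (SimpleGraph.fromEdgeSet X).ConnectedComponent ≤
      {v : V | ∀ e ∈ X, v ∉ e}.ncard + (ccmp X '' boundaryVerts X Y).ncard := by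
  have huniv : (Set.univ : Set (SimpleGraph.fromEdgeSet X).ConnectedComponent) ⊆
      ccmp X '' {v : V | ∀ e ∈ X, v ∉ e} ∪ ccmp X '' boundaryVerts X Y := by
    intro c _
    induction c using SimpleGraph.ConnectedComponent.ind with
    | _ v =>
    by_cases hv : ∀ e ∈ X, v ∉ e
    · exact Or.inl ⟨v, hv, rfl⟩
    · push Not at hv
      obtain ⟨e, he, hve⟩ := hv
      have := fiber_two h3 hD hU hY he hve
      obtain ⟨u, hu, huc⟩ := Set.nonempty_of_ncard_ne_zero (by omega :
        {u ∈ boundaryVerts X Y | ccmp X u = ccmp X v}.ncard ≠ 0)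
      exact Or.inr ⟨u, hu, huc⟩
  have h1 := Set.ncard_le_ncard huniv (Set.toFinite _)
  rw [Set.ncard_univ] at h1
  have h2 := Set.ncard_union_le (ccmp X '' {v : V | ∀ e ∈ X, v ∉ e}) (ccmp X '' boundaryVerts X Y)
  have h4 := Set.ncard_image_le (f := ccmp X) (Set.toFinite {v : V | ∀ e ∈ X, v ∉ e})
  omega

lemma comp_ge [Fintype V] {X : Set (Sym2 V)} (hX : X.Nonempty) :
    {v : V | ∀ e ∈ X, v ∉ e}.ncard + 1 ≤
      Nat.card (SimpleGraph.fromEdgeSet X).ConnectedComponent := by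
  obtain ⟨e, he⟩ := hX
  obtain ⟨a, ha⟩ : ∃ a, a ∈ e := by
    induction e with
    | _ a b => exact ⟨a, by simp⟩
  have hreach : ∀ u w : V, (SimpleGraph.fromEdgeSet X).Reachable u w →
      (∀ e ∈ X, u ∉ e) → u = w := by
    rintro u w ⟨W⟩ hu
    cases W with
    | nil => rfl
    | cons h _ =>
      rw [SimpleGraph.fromEdgeSet_adj] at h
      exact absurd (by simp) (hu _ h.1)
  have hna : a ∉ {v : V | ∀ e ∈ X, v ∉ e} := fun h => h e he ha
  rw [← Set.ncard_insert_of_notMem hna (Set.toFinite _), ← Set.ncard_univ]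
  apply Set.ncard_le_ncard_of_injOn (ccmp X) (fun _ _ => Set.mem_univ _) _ (Set.toFinite _)
  intro u hu w hw huw
  have hr : (SimpleGraph.fromEdgeSet X).Reachable u w := SimpleGraph.ConnectedComponent.exact huw
  rcases hu with rfl | hu
  · rcases hw with rfl | hw
    · rfl
    · exact (hreach _ _ hr.symm hw).symm
  · exact hreach _ _ hr hu

lemma outside_card [Fintype V] {G : SimpleGraph V} (h3 : GraphThreeConnected G)
    {X Y : Set (Sym2 V)} (hU : X ∪ Y = G.edgeSet) :
    {v : V | ∀ e ∈ X, v ∉ e}.ncard + {v : V | ∀ e ∈ Y, v ∉ e}.ncard +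
      (boundaryVerts X Y).ncard = Fintype.card V := by
  have hd : Disjoint {v : V | ∀ e ∈ X, v ∉ e} {v : V | ∀ e ∈ Y, v ∉ e} := by
    rw [Set.disjoint_left]
    intro v hv hw
    have := deg_three h3 v
    obtain ⟨w, hvw⟩ := Set.nonempty_of_ncard_ne_zero (by omega : (G.neighborSet v).ncard ≠ 0)
    have hE : s(v, w) ∈ X ∪ Y := hU ▸ hvw
    rcases hE with h | h
    · exact hv _ h (by simp)
    · exact hw _ h (by simp)
  rw [← Set.ncard_union_eq hd]
  have hB : boundaryVerts X Y = ({v : V | ∀ e ∈ X, v ∉ e} ∪ {v : V | ∀ e ∈ Y, v ∉ e})ᶜ := by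
    ext v
    simp only [boundaryVerts, Set.mem_ofPred_eq, Set.mem_compl_iff, Set.mem_union, not_or]
    push Not
    rfl
  rw [hB, Set.ncard_add_ncard_compl, Nat.card_eq_fintype_card]

lemma comp_edgeSet [Fintype V] {G : SimpleGraph V} (h3 : GraphThreeConnected G) :
    Nat.card (SimpleGraph.fromEdgeSet G.edgeSet).ConnectedComponent = 1 := by
  rw [SimpleGraph.fromEdgeSet_edgeSet]
  have hc := h3.2 ∅ (by simp)
  have hpre : G.Preconnected := by
    intro u v
    have := hc.preconnected ⟨u, by simp⟩ ⟨v, by simp⟩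
    exact this.map (SimpleGraph.Embedding.induce _).toHom
  obtain ⟨v, -⟩ := hc.nonempty
  rw [Nat.card_eq_one_iff_unique]
  exact ⟨hpre.subsingleton_connectedComponent, ⟨G.connectedComponentMk v⟩⟩

lemma sep_ineq [Fintype V] {G : SimpleGraph V} (h3 : GraphThreeConnected G)
    {M : Matroid (Sym2 V)} (hM : IsCycleMatroidOf M G) {X Y : Set (Sym2 V)} {k : ℕ} (hk : 1 ≤ k)
    (h : mKSep M k X Y) :
    (boundaryVerts X Y).ncard + 2 ≤ (ccmp X '' boundaryVerts X Y).ncard +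
      (ccmp Y '' boundaryVerts X Y).ncard + k := by
  obtain ⟨hD, hU, hkX, hkY, hr⟩ := h
  rw [hM.1] at hU hr
  have h1 := mRk_add_comp hM (hU ▸ Set.subset_union_left : X ⊆ G.edgeSet)
  have h2 := mRk_add_comp hM (hU ▸ Set.subset_union_right : Y ⊆ G.edgeSet)
  have h4 := mRk_add_comp hM (subset_refl G.edgeSet)
  rw [comp_edgeSet h3] at h4
  have h5 := comp_le h3 hD hU (Set.nonempty_of_ncard_ne_zero (by omega))
  have h6 := comp_le h3 hD.symm ((Set.union_comm _ _).trans hU)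
    (Set.nonempty_of_ncard_ne_zero (by omega))
  rw [boundaryVerts_comm Y X] at h6
  have h7 := outside_card h3 hU
  omega

lemma edges_three [Fintype V] {G : SimpleGraph V} (h3 : GraphThreeConnected G)
    {X Y : Set (Sym2 V)} (hU : X ∪ Y = G.edgeSet) (v : V) :
    (∃ e ∈ X, ∃ f ∈ X, e ≠ f ∧ v ∈ e ∧ v ∈ f) ∨ (∃ e ∈ Y, ∃ f ∈ Y, e ≠ f ∧ v ∈ e ∧ v ∈ f) := by
  have h := deg_three h3 v
  rw [← star_ncard, ← hU] at h
  by_contra! hcon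
  have hx : {e ∈ X | v ∈ e}.ncard ≤ 1 := by
    rw [Set.ncard_le_one]
    rintro a ⟨ha, hva⟩ b ⟨hb, hvb⟩
    by_contra hab
    exact hcon.1 a ha b hb hab hva hvb
  have hy : {e ∈ Y | v ∈ e}.ncard ≤ 1 := by
    rw [Set.ncard_le_one]
    rintro a ⟨ha, hva⟩ b ⟨hb, hvb⟩
    by_contra hab
    exact hcon.2 a ha b hb hab hva hvb
  have : {e ∈ X ∪ Y | v ∈ e} = {e ∈ X | v ∈ e} ∪ {e ∈ Y | v ∈ e} := by
    ext e; simp only [Set.mem_ofPred_eq, Set.mem_union]; tauto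
  rw [this] at h
  have := Set.ncard_union_le {e ∈ X | v ∈ e} {e ∈ Y | v ∈ e}
  omega

/-- All components single edges: few edges. -/
lemma ncard_le_image [Fintype V] {G : SimpleGraph V} (h3 : GraphThreeConnected G)
    {X Y : Set (Sym2 V)} (hD : Disjoint X Y) (hU : X ∪ Y = G.edgeSet) (hY : Y.Nontrivial)
    (hX : ∀ v ∈ boundaryVerts X Y, ¬ 3 ≤ {u ∈ boundaryVerts X Y | ccmp X u = ccmp X v}.ncard) :
    X.ncard ≤ (ccmp X '' boundaryVerts X Y).ncard := by
  have hex : ∀ e ∈ X, ∃ v, v ∈ e ∧ ∃ u ∈ boundaryVerts X Y, ccmp X u = ccmp X v := by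
    intro e he
    obtain ⟨a, ha⟩ : ∃ a, a ∈ e := by
      induction e with
      | _ a b => exact ⟨a, by simp⟩
    have := fiber_two h3 hD hU hY.nonempty he ha
    obtain ⟨u, hu, huc⟩ := Set.nonempty_of_ncard_ne_zero (by omega :
        {u ∈ boundaryVerts X Y | ccmp X u = ccmp X a}.ncard ≠ 0)
    exact ⟨a, ha, u, hu, huc⟩
  have : Nonempty V := ⟨by
    have := h3.1
    exact (Nat.card_pos_iff.1 (by omega : 0 < Nat.card V)).1.some⟩
  choose! g hg using hex
  apply Set.ncard_le_ncard_of_injOn (fun e => ccmp X (g e)) _ _ (Set.toFinite _)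
  · intro e he
    obtain ⟨u, hu, huc⟩ := (hg e he).2
    exact ⟨u, hu, huc⟩
  · intro e he f hf hef
    by_contra hne
    obtain ⟨u, hu, huc⟩ := (hg e he).2
    apply hX u hu
    rw [huc]
    exact fiber_three h3 hD hU hY he hf hne (hg e he).1 (hg f hf).1 hef.symm

/-- The exceptional configuration cannot occur. -/
lemma no_cross [Fintype V] {G : SimpleGraph V} (h3 : GraphThreeConnected G)
    {X Y : Set (Sym2 V)} (hU : X ∪ Y = G.edgeSet)
    (c : (SimpleGraph.fromEdgeSet X).ConnectedComponent)
    (d : (SimpleGraph.fromEdgeSet Y).ConnectedComponent)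
    (hcov : ∀ v ∈ boundaryVerts X Y, ccmp X v = c ∨ ccmp Y v = d)
    (h1 : {u ∈ boundaryVerts X Y | ccmp X u = c ∧ ccmp Y u = d}.ncard ≤ 1)
    (hc : ∃ v ∈ boundaryVerts X Y, ccmp X v = c) (hd : ∃ v ∈ boundaryVerts X Y, ccmp Y v = d) :
    False := by
  set P : Set (Sym2 V) := {e ∈ X | ∀ v ∈ e, ccmp X v = c} ∪ {e ∈ Y | ∀ v ∈ e, ccmp Y v ≠ d} with hP
  set Q : Set (Sym2 V) := {e ∈ X | ∀ v ∈ e, ccmp X v ≠ c} ∪ {e ∈ Y | ∀ v ∈ e, ccmp Y v = d} with hQ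
  have hPQ : P ∪ Q = G.edgeSet := by
    apply Set.Subset.antisymm
    · rw [← hU]
      rintro e ((h | h) | (h | h))
      · exact Or.inl h.1
      · exact Or.inr h.1
      · exact Or.inl h.1
      · exact Or.inr h.1
    · rw [← hU]
      have key : ∀ (Z : Set (Sym2 V)) (c : (SimpleGraph.fromEdgeSet Z).ConnectedComponent),
          ∀ e ∈ Z, (∀ v ∈ e, ccmp Z v = c) ∨ (∀ v ∈ e, ccmp Z v ≠ c) := by
        intro Z c e he
        by_contra! hcon
        obtain ⟨⟨v, hv, hvc⟩, w, hw, hwc⟩ := hcon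
        exact hvc ((ccmp_eq he hv hw).trans hwc)
      rintro e (he | he)
      · rcases key X c e he with h | h
        · exact Or.inl (Or.inl ⟨he, h⟩)
        · exact Or.inr (Or.inl ⟨he, h⟩)
      · rcases key Y d e he with h | h
        · exact Or.inr (Or.inr ⟨he, h⟩)
        · exact Or.inl (Or.inr ⟨he, h⟩)
  have hsub : boundaryVerts P Q ⊆ {u ∈ boundaryVerts X Y | ccmp X u = c ∧ ccmp Y u = d} := by
    rintro u ⟨⟨e, he, hue⟩, f, hf, huf⟩
    rcases he with ⟨he, hec⟩ | ⟨he, hec⟩ <;> rcases hf with ⟨hf, hfc⟩ | ⟨hf, hfc⟩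
    · exact absurd (hec u hue) (hfc u huf)
    · exact ⟨⟨⟨e, he, hue⟩, f, hf, huf⟩, hec u hue, hfc u huf⟩
    · rcases hcov u ⟨⟨f, hf, huf⟩, e, he, hue⟩ with h | h
      · exact absurd h (hfc u huf)
      · exact absurd h (hec u hue)
    · exact absurd (hfc u huf) (hec u hue)
  have h2 := boundary_two h3 hPQ
    (by
      obtain ⟨v, ⟨⟨e, he, hve⟩, -⟩, hvc⟩ := hc
      exact ⟨e, Or.inl ⟨he, fun w hw => (ccmp_eq he hw hve).trans hvc⟩⟩)
    (by
      obtain ⟨v, ⟨-, e, he, hve⟩, hvc⟩ := hd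
      exact ⟨e, Or.inr ⟨he, fun w hw => (ccmp_eq he hw hve).trans hvc⟩⟩)
  have h4 := Set.ncard_le_ncard hsub (Set.toFinite _)
  omega

lemma int4_ncard {G : SimpleGraph V} {X : Set (Sym2 V)}
    (h : IsTriangleEdgeSet G X ∨ IsDegree3Star G X) : X.ncard ≤ 3 := by
  rcases h with ⟨a, b, c, -, -, -, -, -, -, rfl⟩ | ⟨v, hv, rfl⟩
  · refine (Set.ncard_insert_le _ _).trans ?_
    have := Set.ncard_insert_le s(b, c) {s(a, c)}
    rw [Set.ncard_singleton] at this
    omega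
  · rw [star_ncard, hv]

/-- Facts about the fibers, in the finset form used by the counting lemmas. -/
lemma fin_fiber [Fintype V] (S : Set V) (P : V → Prop) [DecidablePred P] :
    (S.toFinset.filter P).card = {u ∈ S | P u}.ncard := by
  rw [← Set.ncard_coe_finset]
  congr 1
  ext u
  simp

lemma fin_image [Fintype V] {C : Type*} (S : Set V) (p : V → C) :
    (S.toFinset.image p).card = (p '' S).ncard := by
  rw [← Set.ncard_coe_finset]
  congr 1
  ext u
  simp

lemma three_sep [Fintype V] {G : SimpleGraph V} (h3 : GraphThreeConnected G)
    {M : Matroid (Sym2 V)} (hM : IsCycleMatroidOf M G) (h4 : GraphInternally4 G)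
    {X Y : Set (Sym2 V)} (h : mKSep M 3 X Y) : X.ncard ≤ 3 ∨ Y.ncard ≤ 3 := by
  have hineq := sep_ineq h3 hM (by norm_num) h
  obtain ⟨hD, hU, hkX, hkY, -⟩ := h
  rw [hM.1] at hU
  have hU' := (Set.union_comm Y X).trans hU
  have hXn : X.Nontrivial := (Set.one_lt_ncard_iff_nontrivial).1 (by omega)
  have hYn : Y.Nontrivial := (Set.one_lt_ncard_iff_nontrivial).1 (by omega)
  have hcore := core (boundaryVerts X Y).toFinset (ccmp X) (ccmp Y)
    (by
      intro v hv
      rw [fin_fiber]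
      obtain ⟨⟨e, he, hve⟩, -⟩ := Set.mem_toFinset.1 hv
      exact fiber_two h3 hD hU hYn.nonempty he hve)
    (by
      intro v hv
      rw [fin_fiber]
      obtain ⟨-, e, he, hve⟩ := Set.mem_toFinset.1 hv
      rw [boundaryVerts_comm]
      exact fiber_two h3 hD.symm hU' hXn.nonempty he hve)
    (by
      intro v hv
      rw [fin_fiber, fin_fiber]
      rcases edges_three h3 hU v with ⟨e, he, f, hf, hef, hve, hvf⟩ | ⟨e, he, f, hf, hef, hve, hvf⟩
      · exact Or.inl (fiber_three h3 hD hU hYn he hf hef hve hvf rfl)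
      · right
        rw [boundaryVerts_comm]
        exact fiber_three h3 hD.symm hU' hXn he hf hef hve hvf rfl)
    (by
      rw [fin_image, fin_image, ← Set.ncard_eq_toFinset_card']
      omega)
  simp only [fin_fiber, fin_image, ← Set.ncard_eq_toFinset_card', Set.mem_toFinset] at hcore
  rcases hcore with ⟨ha, hb⟩ | ⟨ha, hb⟩ | ha | ⟨c, d, hcov, h1, hc, hd⟩
  · left
    exact (ncard_le_image h3 hD hU hYn hb).trans ha
  · right
    rw [boundaryVerts_comm] at ha hb
    exact (ncard_le_image h3 hD.symm hU' hXn hb).trans ha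
  · have hb := boundary_three h3 hU hXn hYn
    have heq : (boundaryVerts X Y).ncard = 3 := le_antisymm ha hb
    rcases le_total X.ncard Y.ncard with hle | hle
    · exact Or.inl (int4_ncard ((h4 X Y hD hU hkX hle).2 heq))
    · rw [boundaryVerts_comm] at heq
      exact Or.inr (int4_ncard ((h4 Y X hD.symm hU' hkY hle).2 heq))
  · exact (no_cross h3 hU c d hcov h1 hc hd).elim

lemma low_sep [Fintype V] {G : SimpleGraph V} (h3 : GraphThreeConnected G)
    {M : Matroid (Sym2 V)} (hM : IsCycleMatroidOf M G)
    {X Y : Set (Sym2 V)} {k : ℕ} (hk : 1 ≤ k) (hk2 : k ≤ 2) (h : mKSep M k X Y) : False := by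
  have hineq := sep_ineq h3 hM hk h
  obtain ⟨hD, hU, hkX, hkY, -⟩ := h
  rw [hM.1] at hU
  have hU' := (Set.union_comm Y X).trans hU
  have hXn : X.Nonempty := Set.nonempty_of_ncard_ne_zero (by omega)
  have hYn : Y.Nonempty := Set.nonempty_of_ncard_ne_zero (by omega)
  have h1 := card_ge_of_fibers (boundaryVerts X Y).toFinset (ccmp X)
    (by
      intro v hv
      rw [fin_fiber]
      obtain ⟨⟨e, he, hve⟩, -⟩ := Set.mem_toFinset.1 hv
      exact fiber_two h3 hD hU hYn he hve)
  have h2 := card_ge_of_fibers (boundaryVerts X Y).toFinset (ccmp Y)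
    (by
      intro v hv
      rw [fin_fiber]
      obtain ⟨-, e, he, hve⟩ := Set.mem_toFinset.1 hv
      rw [boundaryVerts_comm]
      exact fiber_two h3 hD.symm hU' hXn he hve)
  rw [fin_image, ← Set.ncard_eq_toFinset_card'] at h1 h2
  rcases Nat.lt_or_ge k 2 with hlt | hge
  · omega
  have hXt : X.Nontrivial := (Set.one_lt_ncard_iff_nontrivial).1 (by omega)
  have hYt : Y.Nontrivial := (Set.one_lt_ncard_iff_nontrivial).1 (by omega)
  have hb := boundary_two h3 hU hXn hYn
  obtain ⟨v, hv⟩ := Set.nonempty_of_ncard_ne_zero (by omega : (boundaryVerts X Y).ncard ≠ 0)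
  rcases edges_three h3 hU v with ⟨e, he, f, hf, hef, hve, hvf⟩ | ⟨e, he, f, hf, hef, hve, hvf⟩
  · have h5 := fiber_three h3 hD hU hYt he hf hef hve hvf rfl
    rw [← fin_fiber] at h5
    have := Finset.card_pos.2 ⟨ccmp X v, Finset.mem_filter (p := fun c =>
      3 ≤ ((boundaryVerts X Y).toFinset.filter (fun u => ccmp X u = c)).card) |>.2
      ⟨Finset.mem_image_of_mem (ccmp X) (Set.mem_toFinset.2 hv), h5⟩⟩
    omega
  · have h5 := fiber_three h3 hD.symm hU' hXt he hf hef hve hvf rfl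
    rw [boundaryVerts_comm, ← fin_fiber] at h5
    have := Finset.card_pos.2 ⟨ccmp Y v, Finset.mem_filter (p := fun c =>
      3 ≤ ((boundaryVerts X Y).toFinset.filter (fun u => ccmp Y u = c)).card) |>.2
      ⟨Finset.mem_image_of_mem (ccmp Y) (Set.mem_toFinset.2 hv), h5⟩⟩
    omega

lemma sep_of_boundary [Fintype V] {G : SimpleGraph V} (h3 : GraphThreeConnected G)
    {M : Matroid (Sym2 V)} (hM : IsCycleMatroidOf M G) {X Y : Set (Sym2 V)}
    (hD : Disjoint X Y) (hU : X ∪ Y = G.edgeSet) (hX : 3 ≤ X.ncard) (hY : 3 ≤ Y.ncard)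
    (hB : (boundaryVerts X Y).ncard = 3) : mKSep M 3 X Y := by
  refine ⟨hD, hU.trans hM.1.symm, hX, hY, ?_⟩
  rw [hM.1]
  have h1 := mRk_add_comp hM (hU ▸ Set.subset_union_left : X ⊆ G.edgeSet)
  have h2 := mRk_add_comp hM (hU ▸ Set.subset_union_right : Y ⊆ G.edgeSet)
  have h4 := mRk_add_comp hM (subset_refl G.edgeSet)
  rw [comp_edgeSet h3] at h4
  have h5 := comp_ge (Set.nonempty_of_ncard_ne_zero (by omega : X.ncard ≠ 0))
  have h6 := comp_ge (Set.nonempty_of_ncard_ne_zero (by omega : Y.ncard ≠ 0))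
  have h7 := outside_card h3 hU
  omega

lemma tri_or_star [Fintype V] {G : SimpleGraph V} (h3 : GraphThreeConnected G)
    {X Y : Set (Sym2 V)} (hU : X ∪ Y = G.edgeSet) (hX : X.ncard = 3)
    (hB : (boundaryVerts X Y).ncard = 3) : IsTriangleEdgeSet G X ∨ IsDegree3Star G X := by
  have hXs : X ⊆ G.edgeSet := hU ▸ Set.subset_union_left
  by_cases hin : ∀ e ∈ X, ∀ v ∈ e, v ∈ boundaryVerts X Y
  · left
    obtain ⟨a, b, c, hab, hac, hbc, hS⟩ := Set.ncard_eq_three.1 hB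
    rw [hS] at hin
    have hsub : X ⊆ {s(a, b), s(b, c), s(a, c)} := by
      intro e he
      obtain ⟨x, y, hxy, rfl⟩ := exists_ends (hXs he)
      have hx := hin _ he x (by simp)
      have hy := hin _ he y (by simp)
      simp only [Set.mem_insert_iff, Set.mem_singleton_iff] at hx hy
      rcases hx with rfl | rfl | rfl <;> rcases hy with rfl | rfl | rfl <;>
        simp_all [Sym2.eq_swap]
    have hle : ({s(a, b), s(b, c), s(a, c)} : Set (Sym2 V)).ncard ≤ X.ncard := by
      rw [hX]
      refine (Set.ncard_insert_le _ _).trans ?_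
      have := Set.ncard_insert_le s(b, c) {s(a, c)}
      rw [Set.ncard_singleton] at this
      omega
    have heq := Set.eq_of_subset_of_ncard_le hsub hle (Set.toFinite _)
    refine ⟨a, b, c, hab, hac, hbc, ?_, ?_, ?_, heq⟩
    · exact hXs (show s(a, b) ∈ X by rw [heq]; simp)
    · exact hXs (show s(b, c) ∈ X by rw [heq]; simp)
    · exact hXs (show s(a, c) ∈ X by rw [heq]; simp)
  · right
    push Not at hin
    obtain ⟨e, he, v, hve, hvB⟩ := hin
    have hsub : {e ∈ G.edgeSet | v ∈ e} ⊆ X := by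
      rintro f ⟨hf, hvf⟩
      rw [← hU] at hf
      exact hf.resolve_right fun h => hvB ⟨⟨e, he, hve⟩, f, h, hvf⟩
    have hd := deg_three h3 v
    rw [← star_ncard] at hd
    have heq := Set.eq_of_subset_of_ncard_le hsub (by omega) (Set.toFinite _)
    exact ⟨v, by rw [← star_ncard, heq, hX], heq.symm⟩

end Aux

/-- A simple 3-connected graph is internally 4-connected if and only if its cycle matroid
is an internally 4-connected matroid. -/
theorem statement11 {V : Type*} [Fintype V] (G : SimpleGraph V)
    (h3 : GraphThreeConnected G)
    (M : Matroid (Sym2 V)) (hM : IsCycleMatroidOf M G) :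
    GraphInternally4 G ↔ mInternally4 M := by
  constructor
  · intro h4
    refine ⟨⟨fun X Y h => low_sep h3 hM le_rfl (by norm_num) h,
      fun X Y h => low_sep h3 hM (by norm_num) le_rfl h⟩, fun X Y h => ?_⟩
    have h1 := three_sep h3 hM h4 h
    have h2 := h.2.2.1
    have h5 := h.2.2.2.1
    rcases h1 with h1 | h1
    · rw [min_eq_left (by omega)]; omega
    · rw [min_eq_right (by omega)]; omega
  · rintro ⟨-, h⟩ X Y hD hU hX hXY
    refine ⟨boundary_three h3 hU (Set.one_lt_ncard_iff_nontrivial.1 (by omega))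
      (Set.one_lt_ncard_iff_nontrivial.1 (by omega)), fun hB => ?_⟩
    have := h X Y (sep_of_boundary h3 hM hD hU hX (by omega) hB)
    rw [min_eq_left hXY] at this
    exact tri_or_star h3 hU this hB
end

section
/- Every internally 4-connected binary matroid with exactly 9 elements is isomorphic to M(K_{3,3}) or M*(K_{3,3}). -/
open Set Matroid
open scoped Classical

/-- parity pairing of two nibbles: `true` when the dot product vanishes. -/
def pz (h x : ℕ) : Bool := Nat.beq ((27030 >>> (h &&& x)) % 2) 0

def gridL (a b c d : ℕ) : List ℕ :=
  [a, b, a ^^^ b, c, d, c ^^^ d, a ^^^ c, b ^^^ d, (a ^^^ b) ^^^ (c ^^^ d)]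

def badL (L : List ℕ) : Bool :=
  (List.range' 1 15).any fun h1 =>
    Nat.ble 5 (L.countP (pz h1)) &&
      (let R := L.filter (fun x => !pz h1 x)
       (List.range' 1 15).any fun h2 => R.all (pz h2) && Nat.ble 4 (L.countP (pz h2)))

def goodL (L : List ℕ) : Bool :=
  (L.take 1).any fun a => L.any fun b => L.elem (a ^^^ b) && L.any fun c => L.elem (a ^^^ c) &&
    L.any fun d => L.elem (b ^^^ d) && L.all fun x => (gridL a b c d).elem x

theorem check_all : ([3,5,6,7,9,10,11,12,13,14,15].sublistsLen 5).all
    (fun L => badL (1::2::4::8::L) || goodL (1::2::4::8::L)) = true := by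
  decide +kernel

abbrev V4 := Fin 4 → ZMod 2

def enc (x : V4) : ℕ := (x 0).val + 2 * (x 1).val + 4 * (x 2).val + 8 * (x 3).val

def bits (h : ℕ) : V4 := fun i => if h.testBit i then 1 else 0

theorem enc_inj : Function.Injective enc := by
  have : ∀ x y : V4, enc x = enc y → x = y := by decide +kernel
  exact fun x y h => this x y h

theorem enc_add : ∀ x y : V4, enc (x + y) = enc x ^^^ enc y := by decide +kernel

theorem enc_mem : ∀ x : V4, x ≠ 0 → enc x = 1 ∨ enc x = 2 ∨ enc x = 4 ∨ enc x = 8 ∨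
    enc x ∈ [3,5,6,7,9,10,11,12,13,14,15] := by decide +kernel

theorem enc_single : enc (Pi.single 0 1) = 1 ∧ enc (Pi.single 1 1) = 2 ∧
    enc (Pi.single 2 1) = 4 ∧ enc (Pi.single 3 1) = 8 := by decide +kernel

theorem pz_enc : ∀ h ∈ List.range' 1 15, ∀ x : V4,
    pz h (enc x) = true ↔ bits h 0 * x 0 + bits h 1 * x 1 + bits h 2 * x 2 + bits h 3 * x 3 = 0 := by
  decide +kernel

theorem bits_ne : ∀ h ∈ List.range' 1 15, bits h ≠ 0 := by decide +kernel

/-- the linear functional attached to a nibble -/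
def fnl (h : V4) : V4 →ₗ[ZMod 2] ZMod 2 :=
  h 0 • LinearMap.proj 0 + h 1 • LinearMap.proj 1 + h 2 • LinearMap.proj 2 + h 3 • LinearMap.proj 3

theorem fnl_ne (h : V4) (hh : h ≠ 0) : fnl h ≠ 0 := by
  intro h0
  apply hh
  ext i
  have := congrArg (fun φ => φ (Pi.single i 1)) h0
  fin_cases i <;> simpa [fnl] using this

theorem pz_fnl (h : ℕ) (hh : h ∈ List.range' 1 15) (x : V4) :
    pz h (enc x) = true ↔ fnl (bits h) x = 0 := by
  rw [pz_enc h hh x]; simp [fnl]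

/-- the 3×3 grid spanned by four vectors -/
def gridV {W : Type*} [AddCommGroup W] (a b c d : W) : Fin 3 → Fin 3 → W :=
  ![![a, b, a + b], ![c, d, c + d], ![a + c, b + d, (a + b) + (c + d)]]

theorem classify {ι : Type*} [Fintype ι] (hc : Fintype.card ι = 9) (f : ι → V4)
    (hf : Function.Injective f) (h0 : ∀ i, f i ≠ 0)
    (hs : ∀ k : Fin 4, ∃ i, f i = Pi.single k 1)
    (hsep : ∀ φ ψ : V4 →ₗ[ZMod 2] ZMod 2, φ ≠ 0 → ψ ≠ 0 → ∀ X : Finset ι, X.card = 4 →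
      (∀ x ∉ X, φ (f x) = 0) → (∀ x ∈ X, ψ (f x) = 0) → False) :
    ∃ (e : ι ≃ Fin 3 × Fin 3) (a b c d : V4), ∀ p : Fin 3 × Fin 3,
      f (e.symm p) = gridV a b c d p.1 p.2 := by
  set L0 : List ℕ := [3,5,6,7,9,10,11,12,13,14,15].filter (fun n => decide (∃ i, enc (f i) = n))
    with hL0
  set L : List ℕ := 1 :: 2 :: 4 :: 8 :: L0 with hL
  have hmem : ∀ n, n ∈ L ↔ ∃ i, enc (f i) = n := by
    intro n
    constructor
    · intro hn
      simp only [hL, List.mem_cons] at hn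
      rcases hn with rfl | rfl | rfl | rfl | hn
      · obtain ⟨i, hi⟩ := hs 0; exact ⟨i, by rw [hi]; exact enc_single.1⟩
      · obtain ⟨i, hi⟩ := hs 1; exact ⟨i, by rw [hi]; exact enc_single.2.1⟩
      · obtain ⟨i, hi⟩ := hs 2; exact ⟨i, by rw [hi]; exact enc_single.2.2.1⟩
      · obtain ⟨i, hi⟩ := hs 3; exact ⟨i, by rw [hi]; exact enc_single.2.2.2⟩
      · simpa using (List.mem_filter.1 hn).2
    · rintro ⟨i, rfl⟩
      simp only [hL, List.mem_cons]
      rcases enc_mem (f i) (h0 i) with h | h | h | h | h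
      · simp [h]
      · simp [h]
      · simp [h]
      · simp [h]
      · right; right; right; right
        exact List.mem_filter.2 ⟨h, by simp⟩
  have hnd : L.Nodup := by
    have hsub : L.Sublist [1,2,4,8,3,5,6,7,9,10,11,12,13,14,15] := by
      rw [hL]
      exact ((((List.filter_sublist).cons_cons _).cons_cons _).cons_cons _).cons_cons _
    exact hsub.nodup (by decide)
  have hinj : Function.Injective (fun i => enc (f i)) := fun i j h => hf (enc_inj h)
  have htf : L.toFinset = Finset.univ.image (fun i => enc (f i)) := by
    ext n; simp [hmem]
  have hlen : L.length = 9 := by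
    rw [← List.toFinset_card_of_nodup hnd, htf, Finset.card_image_of_injective _ hinj,
      Finset.card_univ, hc]
  have hcount : ∀ p : ℕ → Bool, L.countP p = (Finset.univ.filter (fun i => p (enc (f i)) = true)).card := by
    intro p
    rw [List.countP_eq_length_filter, ← List.toFinset_card_of_nodup (hnd.filter p),
      ← Finset.card_image_of_injective _ hinj]
    congr 1
    ext n
    simp only [List.mem_toFinset, List.mem_filter, hmem, Finset.mem_image, Finset.mem_filter,
      Finset.mem_univ, true_and]
    constructor
    · rintro ⟨⟨i, rfl⟩, h⟩; exact ⟨i, h, rfl⟩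
    · rintro ⟨i, h, rfl⟩; exact ⟨⟨i, rfl⟩, h⟩
  have hchk := List.all_eq_true.1 check_all L0 (List.mem_sublistsLen.2
    ⟨List.filter_sublist, by simpa [hL] using hlen⟩)
  rw [← hL, Bool.or_eq_true] at hchk
  rcases hchk with hbad | hgood
  · exfalso
    simp only [badL, List.any_eq_true, Bool.and_eq_true, List.all_eq_true, List.mem_filter,
      Nat.ble_eq, hcount] at hbad
    obtain ⟨h1, hh1, hc1, h2, hh2, hall, hc2⟩ := hbad
    set A := Finset.univ.filter (fun i => pz h1 (enc (f i)) = true) with hA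
    set B := Finset.univ.filter (fun i => pz h2 (enc (f i)) = true) with hB
    have hAB : Aᶜ ⊆ B := by
      intro i hi
      have hi' : ¬ pz h1 (enc (f i)) = true := by simpa [hA] using hi
      simp only [hB, Finset.mem_filter, Finset.mem_univ, true_and]
      exact hall _ ⟨(hmem _).2 ⟨i, rfl⟩, by simpa using hi'⟩
    have hAc : Aᶜ.card ≤ 4 := by rw [Finset.card_compl, hc]; omega
    obtain ⟨X, hX1, hX2, hX⟩ := Finset.exists_subsuperset_card_eq hAB hAc hc2
    refine hsep (fnl (bits h1)) (fnl (bits h2)) (fnl_ne _ (bits_ne _ hh1)) (fnl_ne _ (bits_ne _ hh2))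
      X hX ?_ ?_
    · intro x hx
      rw [← pz_fnl h1 hh1]
      by_contra hcon
      exact hx (hX1 (by simpa [hA] using hcon))
    · intro x hx
      rw [← pz_fnl h2 hh2]
      have := hX2 hx
      simpa [hB] using this
  · simp only [goodL, List.any_eq_true, Bool.and_eq_true, List.all_eq_true] at hgood
    obtain ⟨a, ha, b, hb, -, c, hc', -, d, hd, -, hall⟩ := hgood
    obtain ⟨ia, rfl⟩ := (hmem a).1 (List.mem_of_mem_take ha)
    obtain ⟨ib, rfl⟩ := (hmem b).1 hb
    obtain ⟨ic, rfl⟩ := (hmem c).1 hc'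
    obtain ⟨id, rfl⟩ := (hmem d).1 hd
    have hex : ∀ i, ∃ p : Fin 3 × Fin 3, f i = gridV (f ia) (f ib) (f ic) (f id) p.1 p.2 := by
      intro i
      have := hall (enc (f i)) ((hmem _).2 ⟨i, rfl⟩)
      simp only [gridL, ← enc_add, List.elem_eq_mem, decide_eq_true_eq, List.mem_cons,
        List.not_mem_nil, or_false, enc_inj.eq_iff] at this
      rcases this with h | h | h | h | h | h | h | h | h
      · exact ⟨(0, 0), h⟩
      · exact ⟨(0, 1), h⟩
      · exact ⟨(0, 2), h⟩
      · exact ⟨(1, 0), h⟩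
      · exact ⟨(1, 1), h⟩
      · exact ⟨(1, 2), h⟩
      · exact ⟨(2, 0), h⟩
      · exact ⟨(2, 1), h⟩
      · exact ⟨(2, 2), h⟩
    choose e he using hex
    have hei : Function.Injective e := fun i j h => hf (by rw [he i, he j, h])
    have heb : Function.Bijective e :=
      (Fintype.bijective_iff_injective_and_card e).2 ⟨hei, by simp [hc]⟩
    refine ⟨Equiv.ofBijective e heb, f ia, f ib, f ic, f id, fun p => ?_⟩
    rw [he]
    have : e ((Equiv.ofBijective e heb).symm p) = p := (Equiv.ofBijective e heb).apply_symm_apply p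
    rw [this]

theorem mRk_eq_of_isBasis {α : Type*} {M : Matroid α} (hE : M.E.Finite) {I X : Set α}
    (h : M.IsBasis I X) : mRk M X = I.ncard := by
  have hub : ∀ n ∈ Set.ncard '' {I | I ⊆ X ∧ M.Indep I}, n ≤ I.ncard := by
    rintro _ ⟨J, ⟨hJX, hJ⟩, rfl⟩
    have h1 := hJ.encard_le_eRk_of_subset hJX
    rw [← h.encard_eq_eRk] at h1
    have hI := hE.subset h.indep.subset_ground
    have hJf := hE.subset hJ.subset_ground
    rw [← hI.cast_ncard_eq, ← hJf.cast_ncard_eq] at h1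
    exact_mod_cast h1
  apply le_antisymm
  · exact csSup_le' hub
  · exact le_csSup ⟨_, hub⟩ ⟨I, ⟨h.subset, h.indep⟩, rfl⟩

theorem mRk_le {α : Type*} {M : Matroid α} {X : Set α} {n : ℕ}
    (h : ∀ I ⊆ X, M.Indep I → I.ncard ≤ n) : mRk M X ≤ n := by
  apply csSup_le'
  rintro _ ⟨J, ⟨hJX, hJ⟩, rfl⟩
  exact h J hJX hJ

theorem le_mRk {α : Type*} {M : Matroid α} (hE : M.E.Finite) {I X : Set α} (hX : X ⊆ M.E)
    (hI : M.Indep I) (hIX : I ⊆ X) : I.ncard ≤ mRk M X := by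
  obtain ⟨J, hJ, hIJ⟩ := hI.subset_isBasis_of_subset hIX hX
  rw [mRk_eq_of_isBasis hE hJ]
  exact Set.ncard_le_ncard hIJ (hE.subset hJ.indep.subset_ground)

theorem mRk_base {α : Type*} {M : Matroid α} (hE : M.E.Finite) {B : Set α} (hB : M.IsBase B) :
    mRk M M.E = B.ncard := mRk_eq_of_isBasis hE hB.isBasis_ground

theorem mRk_dual_ground {α : Type*} {M : Matroid α} (hE : M.E.Finite) :
    mRk M✶ M✶.E + mRk M M.E = M.E.ncard := by
  obtain ⟨B, hB⟩ := M.exists_isBase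
  rw [mRk_base hE hB, mRk_base (M := M✶) hE hB.compl_isBase_dual]
  exact Set.ncard_sdiff_add_ncard_of_subset hB.subset_ground hE

theorem mRk_dual_ge {α : Type*} {M : Matroid α} (hE : M.E.Finite) {X Y : Set α}
    (hd : Disjoint X Y) (hu : X ∪ Y = M.E) :
    X.ncard + mRk M Y ≤ mRk M✶ X + mRk M M.E := by
  have hYE : Y ⊆ M.E := hu ▸ subset_union_right
  have hXE : X ⊆ M.E := hu ▸ subset_union_left
  obtain ⟨J, hJ⟩ := M.exists_isBasis Y
  obtain ⟨B, hB, hJB⟩ := hJ.indep.exists_isBase_superset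
  have hXf := hE.subset hXE
  have h1 : (X \ B).ncard ≤ mRk M✶ X := by
    apply le_mRk (M := M✶) hE hXE _ sdiff_subset
    exact hB.compl_isBase_dual.indep.subset (sdiff_subset_sdiff_left hXE)
  have hBf := hE.subset hB.subset_ground
  have h2 : (X ∩ B).ncard + (X \ B).ncard = X.ncard := Set.ncard_inter_add_ncard_sdiff_eq_ncard X B hXf
  have h3 : J.ncard + (X ∩ B).ncard ≤ B.ncard := by
    rw [← Set.ncard_union_eq _ (hE.subset hJ.indep.subset_ground) (hXf.inter_of_left B)]
    · exact Set.ncard_le_ncard (union_subset hJB inter_subset_right) hBf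
    · exact (hd.symm.mono hJ.subset inter_subset_left)
  rw [mRk_base hE hB, mRk_eq_of_isBasis hE hJ]
  omega

theorem kSep_dual {α : Type*} {M : Matroid α} (hE : M.E.Finite) {k : ℕ} {X Y : Set α}
    (h : mKSep M✶ k X Y) : mKSep M k X Y := by
  obtain ⟨hd, hu, hX, hY, hr⟩ := h
  have hu' : X ∪ Y = M.E := hu
  refine ⟨hd, hu', hX, hY, ?_⟩
  have h1 := mRk_dual_ge hE hd hu'
  have h2 := mRk_dual_ge hE hd.symm (by rw [Set.union_comm]; exact hu')
  have h3 := mRk_dual_ground hE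
  have h4 : X.ncard + Y.ncard = M.E.ncard := by
    rw [← hu']
    exact (Set.ncard_union_eq hd (hE.subset (hu' ▸ subset_union_left))
      (hE.subset (hu' ▸ subset_union_right))).symm
  omega

theorem int4_dual {α : Type*} {M : Matroid α} (hE : M.E.Finite) (h : mInternally4 M) :
    mInternally4 M✶ :=
  ⟨⟨fun X Y hs => h.1.1 X Y (kSep_dual hE hs), fun X Y hs => h.1.2 X Y (kSep_dual hE hs)⟩,
    fun X Y hs => h.2 X Y (kSep_dual hE hs)⟩

/-- `M` is represented by the vectors `v`, its ground set being labelled by `g`. -/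
def IRep {α ι W : Type*} [AddCommGroup W] [Module (ZMod 2) W] (M : Matroid α) (g : ι → α)
    (v : ι → W) : Prop :=
  Function.Injective g ∧ range g = M.E ∧
    ∀ I : Set ι, M.Indep (g '' I) ↔ LinearIndepOn (ZMod 2) v I

theorem iRep_of_binRep {α ι W : Type*} [AddCommGroup W] [Module (ZMod 2) W] {M : Matroid α}
    {E : Set α} {v : α → W} (h : IsBinRepOn M E v) (g : ι → α) (hg : Function.Injective g)
    (hr : range g = E) : IRep M g (v ∘ g) := by
  refine ⟨hg, hr.trans h.1.symm, fun I => ?_⟩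
  rw [h.2 _ (hr ▸ image_subset_range g I)]
  change LinearIndepOn (ZMod 2) v (g '' I) ↔ _
  exact ⟨fun h => h.comp_of_image hg.injOn, fun h => h.image_of_comp⟩

theorem iRep_span {α ι W : Type*} [AddCommGroup W] [Module (ZMod 2) W] {M : Matroid α}
    {g : ι → α} {v : ι → W} (h : IRep M g v) {B : Set ι} {X : Set ι}
    (hB : M.IsBasis (g '' B) (g '' X)) {x : ι} (hx : x ∈ X) :
    v x ∈ Submodule.span (ZMod 2) (v '' B) := by
  by_cases hxB : x ∈ B
  · exact Submodule.subset_span (mem_image_of_mem _ hxB)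
  by_contra hcon
  have h1 : LinearIndepOn (ZMod 2) v (insert x B) :=
    ((h.2.2 B).1 hB.indep).insert hcon
  have h2 := (h.2.2 _).2 h1
  rw [image_insert_eq] at h2
  have := hB.mem_of_insert_indep (mem_image_of_mem g hx) h2
  exact hxB ((h.1.mem_set_image).1 this)

/-- cycle space -/
def cyc {ι W : Type*} [Fintype ι] [AddCommGroup W] [Module (ZMod 2) W] (v : ι → W) :
    Submodule (ZMod 2) (ι → ZMod 2) := LinearMap.ker (Fintype.linearCombination (ZMod 2) v)

/-- the coordinate functionals on the cycle space, representing the dual matroid -/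
def dualVec {ι W : Type*} [Fintype ι] [AddCommGroup W] [Module (ZMod 2) W] (v : ι → W) (i : ι) :
    cyc v →ₗ[ZMod 2] ZMod 2 := (LinearMap.proj i) ∘ₗ (cyc v).subtype

theorem mem_cyc {ι W : Type*} [Fintype ι] [AddCommGroup W] [Module (ZMod 2) W] (v : ι → W)
    (k : ι → ZMod 2) : k ∈ cyc v ↔ ∑ i, k i • v i = 0 := by
  simp [cyc, Fintype.linearCombination_apply]

theorem image_preimage_of_sub {α ι : Type*} {g : ι → α} {B E : Set α} (hr : range g = E)
    (hB : B ⊆ E) : g '' (g ⁻¹' B) = B := image_preimage_eq_of_subset (hr ▸ hB)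

theorem iRep_dual {α ι W : Type*} [Fintype ι] [AddCommGroup W] [Module (ZMod 2) W] {M : Matroid α}
    {g : ι → α} {v : ι → W} (h : IRep M g v) : IRep M✶ g (dualVec v) := by
  refine ⟨h.1, h.2.1, fun I => ?_⟩
  have hIE : g '' I ⊆ M.E := h.2.1 ▸ image_subset_range g I
  constructor
  · intro hI
    obtain ⟨B, hB, hdis⟩ := (dual_indep_iff_exists hIE).1 hI
    have hgB : g '' (g ⁻¹' B) = B := image_preimage_of_sub h.2.1 hB.subset_ground
    have hbas : M.IsBasis (g '' (g ⁻¹' B)) (g '' univ) := by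
      rw [hgB, image_univ, h.2.1]; exact hB.isBasis_ground
    rw [linearIndepOn_iff']
    intro s c hs hsum i hi
    have hspan := iRep_span h hbas (mem_univ i)
    rw [Finsupp.mem_span_image_iff_linearCombination] at hspan
    obtain ⟨l, hl, hlv⟩ := hspan
    have hk : (Pi.single i 1 + ⇑l : ι → ZMod 2) ∈ cyc v := by
      rw [mem_cyc]
      rw [Finsupp.linearCombination_apply, Finsupp.sum_fintype _ _ (by simp)] at hlv
      simp only [Pi.add_apply, add_smul, Finset.sum_add_distrib, hlv]
      have : ∑ j, (Pi.single i 1 : ι → ZMod 2) j • v j = v i := by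
        rw [Finset.sum_eq_single i] <;> simp +contextual
      rw [this, ← two_smul (ZMod 2) (v i)]
      rw [show (2 : ZMod 2) = 0 from rfl, zero_smul]
    have := congrArg (fun φ => φ ⟨_, hk⟩) hsum
    simp only [LinearMap.sum_apply, LinearMap.smul_apply, dualVec, LinearMap.zero_apply] at this
    rw [Finset.sum_eq_single i] at this
    · have hli : l i = 0 := by
        by_contra hne
        have h1 : i ∈ g ⁻¹' B := hl (Finsupp.mem_support_iff.2 hne)
        exact disjoint_left.1 hdis (mem_image_of_mem g (hs hi)) h1
      simpa [hli] using this
    · intro j hj hji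
      have hlj : l j = 0 := by
        by_contra hne
        have h1 : j ∈ g ⁻¹' B := hl (Finsupp.mem_support_iff.2 hne)
        exact disjoint_left.1 hdis (mem_image_of_mem g (hs hj)) h1
      simp [hlj, hji]
    · intro hi'; exact absurd hi hi'
  · intro hLI
    rw [dual_indep_iff_exists hIE]
    have hcE : g '' Iᶜ ⊆ M.E := h.2.1 ▸ image_subset_range g _
    obtain ⟨J, hJ⟩ := M.exists_isBasis (g '' Iᶜ)
    obtain ⟨B, hB, hJB⟩ := hJ.indep.exists_isBase_superset
    refine ⟨B, hB, ?_⟩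
    rw [disjoint_left]
    rintro _ ⟨i, hiI, rfl⟩ hiB
    have hgB : g '' (g ⁻¹' B) = B := image_preimage_of_sub h.2.1 hB.subset_ground
    have hgJ : g '' (g ⁻¹' J) = J := image_preimage_of_sub h.2.1 hJ.indep.subset_ground
    have hBI : LinearIndepOn (ZMod 2) v (g ⁻¹' B) := (h.2.2 _).1 (by rw [hgB]; exact hB.indep)
    have hnot : v i ∉ Submodule.span (ZMod 2) (v '' (g ⁻¹' J)) := by
      intro hmem
      refine hBI.notMem_span (i := i) ?_ ?_
      · exact hiB
      · refine Submodule.span_mono (image_mono ?_) hmem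
        intro j hj
        refine ⟨hJB hj, ?_⟩
        rintro rfl
        obtain ⟨j', hj', hjj⟩ := hJ.subset hj
        rw [h.1 hjj] at hj'
        exact hj' hiI
    obtain ⟨φ, hφ1, hφ2⟩ := Submodule.exists_le_ker_of_notMem hnot
    have hz : ∀ j ∉ I, φ (v j) = 0 := by
      intro j hj
      exact hφ2 (iRep_span h (X := Iᶜ) (by rw [hgJ]; exact hJ) hj)
    rw [linearIndepOn_iff'] at hLI
    apply hφ1
    refine hLI (Finset.univ.filter (fun j => j ∈ I)) (fun j => φ (v j)) (by simp) ?_ i (by simpa using hiI)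
    ext k
    have hk := (mem_cyc v k.1).1 k.2
    have := congrArg φ hk
    simp only [map_sum, map_smul, map_zero] at this
    simp only [LinearMap.sum_apply, LinearMap.smul_apply, dualVec, LinearMap.zero_apply]
    rw [← this, Finset.sum_filter]
    apply Finset.sum_congr rfl
    intro j _
    by_cases hj : j ∈ I
    · simp [hj, mul_comm]
    · simp [hj, hz j hj]

theorem ncard_le_of_ker {ι : Type*} [Fintype ι] {f : ι → V4} {I : Set ι}
    (h : LinearIndepOn (ZMod 2) f I) {ψ : V4 →ₗ[ZMod 2] ZMod 2} (hψ : ψ ≠ 0)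
    (hI : ∀ i ∈ I, ψ (f i) = 0) : I.ncard ≤ 3 := by
  have h1 : LinearIndependent (ZMod 2) (fun i : I => (⟨f i, hI i i.2⟩ : LinearMap.ker ψ)) :=
    LinearIndependent.of_comp (LinearMap.ker ψ).subtype h
  have h2 := h1.fintype_card_le_finrank
  have h3 := LinearMap.finrank_range_add_finrank_ker ψ
  have h4 : Module.finrank (ZMod 2) (LinearMap.range ψ) ≠ 0 := by
    rw [Ne, Submodule.finrank_eq_zero, LinearMap.range_eq_bot]; exact hψ
  have h5 : Module.finrank (ZMod 2) V4 = 4 := by simp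
  rw [Set.ncard_eq_toFinset_card', Set.toFinset_card]
  omega

theorem pair_indep {α : Type*} {M : Matroid α} (h9 : M.E.ncard = 9) (h4 : mInternally4 M)
    {x y : α} (hx : x ∈ M.E) (hy : y ∈ M.E) (hxy : x ≠ y) : M.Indep {x, y} := by
  by_contra hcon
  have hE : M.E.Finite := Set.finite_of_ncard_ne_zero (by omega)
  have hsub : ({x, y} : Set α) ⊆ M.E := by
    rintro z (rfl | rfl) <;> assumption
  have hn : ({x, y} : Set α).ncard = 2 := Set.ncard_pair hxy
  apply h4.1.2 {x, y} (M.E \ {x, y})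
  refine ⟨disjoint_sdiff_right, union_sdiff_cancel hsub, hn.ge, ?_, ?_⟩
  · have := Set.ncard_sdiff_add_ncard_of_subset hsub hE
    omega
  · have h1 : mRk M {x, y} ≤ 1 := by
      apply mRk_le
      intro I hI hIi
      by_contra hlt
      have : I = {x, y} := Set.eq_of_subset_of_ncard_le hI (by omega) (by simp)
      exact hcon (this ▸ hIi)
    have h2 : mRk M (M.E \ {x, y}) ≤ mRk M M.E :=
      mRk_le fun I hI hIi => le_mRk hE subset_rfl hIi (hI.trans sdiff_subset)
    omega

theorem lowrank {α ι W : Type*} [Fintype ι] [AddCommGroup W] [Module (ZMod 2) W] {M : Matroid α}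
    {g : ι → α} {v : ι → W} (h : IRep M g v) (h9 : M.E.ncard = 9) (h4 : mInternally4 M)
    (hr : mRk M M.E ≤ 4) :
    ∃ (e : ι ≃ Fin 3 × Fin 3) (a b c d : V4), LinearIndependent (ZMod 2) ![a, b, c, d] ∧
      IRep M (g ∘ e.symm) (fun p => gridV a b c d p.1 p.2) := by
  have hE : M.E.Finite := Set.finite_of_ncard_ne_zero (by omega)
  have hcard : Fintype.card ι = 9 := by
    rw [← h9, ← h.2.1, ← image_univ, Set.ncard_image_of_injective _ h.1, Set.ncard_univ,
      Nat.card_eq_fintype_card]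
  have hpair : ∀ i j, i ≠ j → LinearIndepOn (ZMod 2) v {i, j} := by
    intro i j hij
    rw [← h.2.2, image_pair]
    exact pair_indep h9 h4 (h.2.1 ▸ mem_range_self i) (h.2.1 ▸ mem_range_self j) (h.1.ne hij)
  obtain ⟨B', hB'⟩ := M.exists_isBase
  set B : Set ι := g ⁻¹' B' with hBdef
  have hgB : g '' B = B' := image_preimage_of_sub h.2.1 hB'.subset_ground
  have hbas : M.IsBasis (g '' B) (g '' univ) := by
    rw [hgB, image_univ, h.2.1]; exact hB'.isBasis_ground
  have hBn : Fintype.card B ≤ 4 := by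
    rw [mRk_base hE hB', ← hgB, Set.ncard_image_of_injective _ h.1,
      Set.ncard_eq_toFinset_card', Set.toFinset_card] at hr
    exact hr
  have hLI : LinearIndependent (ZMod 2) (fun i : B => v i) :=
    (h.2.2 B).1 (by rw [hgB]; exact hB'.indep)
  have hsp : ∀ i, v i ∈ Submodule.span (ZMod 2) (range fun i : B => v i) := by
    intro i
    have := iRep_span h hbas (mem_univ i)
    rwa [image_eq_range] at this
  let bs := Module.Basis.span hLI
  let u : ι → Submodule.span (ZMod 2) (range fun i : B => v i) := fun i => ⟨v i, hsp i⟩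
  let f0 : ι → (B → ZMod 2) := fun i => bs.equivFun (u i)
  have huLI : ∀ I : Set ι, LinearIndepOn (ZMod 2) v I ↔ LinearIndepOn (ZMod 2) u I := by
    intro I
    exact LinearMap.linearIndepOn_iff_of_injOn (Submodule.subtype _)
      (Submodule.subtype_injective _).injOn (v := u)
  have hinj : Function.Injective v := by
    intro i j hij
    by_contra hne
    exact hne ((hpair i j hne).injOn (by simp) (by simp) hij)
  have hne : ∀ i, v i ≠ 0 := by
    intro i
    have : Nontrivial ι := Fintype.one_lt_card_iff_nontrivial.1 (by omega)
    obtain ⟨j, hj⟩ := exists_ne i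
    exact (hpair i j hj.symm).ne_zero (by simp)
  have hf0inj : Function.Injective f0 := by
    intro i j hij
    have := bs.equivFun.injective hij
    exact hinj (congrArg Subtype.val this)
  have hf0ne : ∀ i, f0 i ≠ 0 := by
    intro i hi
    have : u i = 0 := (LinearEquiv.map_eq_zero_iff _).1 hi
    exact hne i (congrArg Subtype.val this)
  have hB4 : Fintype.card B = 4 := by
    have h1 : Fintype.card ι ≤ Fintype.card (B → ZMod 2) := Fintype.card_le_of_injective f0 hf0inj
    rw [hcard, Fintype.card_fun, ZMod.card] at h1
    by_contra hcon
    have h2 : Fintype.card B ≤ 3 := by omega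
    have h3 := Nat.pow_le_pow_right (n := 2) (by norm_num) h2
    omega
  let eB : B ≃ Fin 4 := Fintype.equivFinOfCardEq hB4
  let bs4 := bs.reindex eB
  let f : ι → V4 := fun i => bs4.equivFun (u i)
  have hfinj : Function.Injective f := by
    intro i j hij
    have := bs4.equivFun.injective hij
    exact hinj (congrArg Subtype.val this)
  have hfne : ∀ i, f i ≠ 0 := by
    intro i hi
    have : u i = 0 := (LinearEquiv.map_eq_zero_iff _).1 hi
    exact hne i (congrArg Subtype.val this)
  have hfrep : IRep M g f := by
    refine ⟨h.1, h.2.1, fun I => ?_⟩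
    rw [h.2.2, huLI]
    exact (LinearMap.linearIndepOn_iff_of_injOn bs4.equivFun.toLinearMap
      bs4.equivFun.injective.injOn (v := u)).symm
  have hsing : ∀ k : Fin 4, ∃ i, f i = Pi.single k 1 := by
    intro k
    refine ⟨eB.symm k, ?_⟩
    have h1 : u (eB.symm k) = bs4 k := by
      apply Subtype.ext
      simp [u, bs4, bs, Module.Basis.span_apply]
    change bs4.equivFun (u (eB.symm k)) = _
    rw [h1]
    ext j
    rw [Module.Basis.equivFun_self, Pi.single_apply]
    simp [eq_comm]
  have hMr : mRk M M.E = 4 := by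
    rw [mRk_base hE hB', ← hgB, Set.ncard_image_of_injective _ h.1,
      Set.ncard_eq_toFinset_card', Set.toFinset_card]
    exact hB4
  have hrk3 : ∀ (X : Set ι) (ψ : V4 →ₗ[ZMod 2] ZMod 2), ψ ≠ 0 → (∀ i ∈ X, ψ (f i) = 0) →
      mRk M (g '' X) ≤ 3 := by
    intro X ψ hψ hX
    apply mRk_le
    intro I hI hIi
    have hgI : g '' (g ⁻¹' I) = I := image_preimage_of_sub h.2.1 hIi.subset_ground
    rw [← hgI, Set.ncard_image_of_injective _ h.1]
    refine ncard_le_of_ker ((hfrep.2.2 _).1 (by rw [hgI]; exact hIi)) hψ ?_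
    intro i hi
    obtain ⟨j, hj, hji⟩ := hI hi
    rw [← h.1 hji]; exact hX j hj
  obtain ⟨e, a, b, c, d, hgrid⟩ := classify hcard f hfinj hfne hsing (by
    intro φ ψ hφ hψ X hX h1 h2
    have hc1 : (g '' (X : Set ι)).ncard = 4 := by
      rw [Set.ncard_image_of_injective _ h.1, Set.ncard_coe_finset, hX]
    have hc2 : (g '' (X : Set ι)ᶜ).ncard = 5 := by
      rw [Set.ncard_image_of_injective _ h.1]
      have := Set.ncard_add_ncard_compl (X : Set ι)
      rw [Set.ncard_coe_finset, hX, Nat.card_eq_fintype_card, hcard] at this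
      omega
    have := h4.2 (g '' (X : Set ι)) (g '' (X : Set ι)ᶜ) (by
      refine ⟨(disjoint_image_iff h.1).2 disjoint_compl_right, ?_, by omega, by omega, ?_⟩
      · rw [← image_union, union_compl_self, image_univ, h.2.1]
      · have h3 := hrk3 X ψ hψ (by simpa using h2)
        have h4 := hrk3 (X : Set ι)ᶜ φ hφ (by simpa using h1)
        omega)
    rw [hc1, hc2] at this
    simp at this)
  refine ⟨e, a, b, c, d, ?_, ?_⟩
  · apply linearIndependent_of_top_le_span_of_card_eq_finrank
    · set S := Submodule.span (ZMod 2) (range ![a, b, c, d]) with hS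
      have ha : a ∈ S := Submodule.subset_span ⟨0, rfl⟩
      have hb : b ∈ S := Submodule.subset_span ⟨1, rfl⟩
      have hc : c ∈ S := Submodule.subset_span ⟨2, rfl⟩
      have hd : d ∈ S := Submodule.subset_span ⟨3, rfl⟩
      have hall : ∀ p q, gridV a b c d p q ∈ S := by
        intro p q
        fin_cases p <;> fin_cases q
        · exact ha
        · exact hb
        · exact S.add_mem ha hb
        · exact hc
        · exact hd
        · exact S.add_mem hc hd
        · exact S.add_mem ha hc
        · exact S.add_mem hb hd
        · exact S.add_mem (S.add_mem ha hb) (S.add_mem hc hd)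
      rw [← (Pi.basisFun (ZMod 2) (Fin 4)).span_eq, Submodule.span_le]
      rintro _ ⟨k, rfl⟩
      obtain ⟨i, hi⟩ := hsing k
      rw [Pi.basisFun_apply, ← hi]
      have := hall (e i).1 (e i).2
      rw [← hgrid, e.symm_apply_apply] at this
      exact this
    · simp
  · refine ⟨h.1.comp e.symm.injective, ?_, fun I => ?_⟩
    · rw [e.symm.surjective.range_comp, h.2.1]
    · rw [image_comp, hfrep.2.2]
      have : (fun p : Fin 3 × Fin 3 => gridV a b c d p.1 p.2) = f ∘ e.symm := by
        ext1 p; exact (hgrid p).symm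
      rw [this]
      exact ⟨fun h => h.comp_of_image e.symm.injective.injOn, fun h => h.image_of_comp⟩

theorem grid_indep {W : Type*} [AddCommGroup W] [Module (ZMod 2) W] {a b c d : W}
    (h : LinearIndependent (ZMod 2) ![a, b, c, d]) (I : Set (Fin 3 × Fin 3)) :
    LinearIndepOn (ZMod 2) (fun p : Fin 3 × Fin 3 => gridV a b c d p.1 p.2) I ↔
    LinearIndepOn (ZMod 2) (fun p : Fin 3 × Fin 3 =>
      gridV (Pi.single 0 1 : V4) (Pi.single 1 1) (Pi.single 2 1) (Pi.single 3 1) p.1 p.2) I := by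
  rw [linearIndependent_iff_injective_fintypeLinearCombination] at h
  have key := LinearMap.linearIndepOn_iff_of_injOn (Fintype.linearCombination (ZMod 2) ![a, b, c, d])
    (v := fun p : Fin 3 × Fin 3 =>
      gridV (Pi.single 0 1 : V4) (Pi.single 1 1) (Pi.single 2 1) (Pi.single 3 1) p.1 p.2) (s := I)
    h.injOn
  rw [← key]
  have h1 : ∀ p q, gridV a b c d p q = Fintype.linearCombination (ZMod 2) ![a, b, c, d]
      (gridV (Pi.single 0 1 : V4) (Pi.single 1 1) (Pi.single 2 1) (Pi.single 3 1) p q) := by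
    intro p q
    fin_cases p <;> fin_cases q <;>
      simp [gridV, map_add, Fintype.linearCombination_apply_single]
  have h2 : (fun p : Fin 3 × Fin 3 => gridV a b c d p.1 p.2) =
      ⇑(Fintype.linearCombination (ZMod 2) ![a, b, c, d]) ∘ (fun p : Fin 3 × Fin 3 =>
      gridV (Pi.single 0 1 : V4) (Pi.single 1 1) (Pi.single 2 1) (Pi.single 3 1) p.1 p.2) := by
    ext1 p; exact h1 p.1 p.2
  rw [h2]

/-- labelling of the edges of K_{3,3} -/
def edgeL (p : Fin 3 × Fin 3) : Sym2 (Fin 3 ⊕ Fin 3) := s(Sum.inl p.1, Sum.inr p.2)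

theorem edgeL_inj : Function.Injective edgeL := by
  rintro ⟨i, j⟩ ⟨k, l⟩ h
  simpa [edgeL] using h

theorem edgeL_range : range edgeL = (completeBipartiteGraph (Fin 3) (Fin 3)).edgeSet := by
  ext e
  induction e using Sym2.ind with
  | _ x y =>
    rcases x with x | x <;> rcases y with y | y <;> simp [edgeL]

theorem mem_cyc_K33 (k : Fin 3 × Fin 3 → ZMod 2) :
    k ∈ cyc ((incVec : Sym2 (Fin 3 ⊕ Fin 3) → _) ∘ edgeL) ↔
      (∀ i, k (i, 0) + k (i, 1) + k (i, 2) = 0) ∧ (∀ j, k (0, j) + k (1, j) + k (2, j) = 0) := by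
  rw [mem_cyc, funext_iff, Sum.forall]
  refine and_congr (forall_congr' fun i => ?_) (forall_congr' fun j => ?_)
  · fin_cases i <;>
      simp [incVec, edgeL, Fintype.sum_prod_type, Fin.sum_univ_three, add_assoc]
  · fin_cases j <;>
      simp [incVec, edgeL, Fintype.sum_prod_type, Fin.sum_univ_three, add_assoc]

theorem z2_third : ∀ a b c : ZMod 2, a + b + c = 0 → c = a + b := by decide

theorem K33_dual (N : Matroid (Sym2 (Fin 3 ⊕ Fin 3)))
    (hN : IsCycleMatroidOf N (completeBipartiteGraph (Fin 3) (Fin 3))) (I : Set (Fin 3 × Fin 3)) :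
    N✶.Indep (edgeL '' I) ↔ LinearIndepOn (ZMod 2) (fun p : Fin 3 × Fin 3 =>
      gridV (Pi.single 0 1 : V4) (Pi.single 1 1) (Pi.single 2 1) (Pi.single 3 1) p.1 p.2) I := by
  have h1 := iRep_dual (iRep_of_binRep hN edgeL edgeL_inj edgeL_range)
  set w := dualVec ((incVec : Sym2 (Fin 3 ⊕ Fin 3) → _) ∘ edgeL) with hw
  have hLI : LinearIndependent (ZMod 2) ![w (0, 0), w (0, 1), w (1, 0), w (1, 1)] := by
    rw [Fintype.linearIndependent_iff]
    intro c hc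
    have hmem : ∀ x y z t : ZMod 2, (fun p : Fin 3 × Fin 3 => gridV x y z t p.1 p.2) ∈
        cyc ((incVec : Sym2 (Fin 3 ⊕ Fin 3) → _) ∘ edgeL) := by
      intro x y z t
      rw [mem_cyc_K33]
      revert x y z t
      decide +kernel
    have hev : ∀ x y z t : ZMod 2, c 0 * x + c 1 * y + c 2 * z + c 3 * t = 0 := by
      intro x y z t
      have := congrArg (fun φ => φ ⟨_, hmem x y z t⟩) hc
      simpa [Fin.sum_univ_four, hw, dualVec, gridV] using this
    intro i
    fin_cases i
    · simpa using hev 1 0 0 0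
    · simpa using hev 0 1 0 0
    · simpa using hev 0 0 1 0
    · simpa using hev 0 0 0 1
  have hg : w = fun p : Fin 3 × Fin 3 =>
      gridV (w (0, 0)) (w (0, 1)) (w (1, 0)) (w (1, 1)) p.1 p.2 := by
    ext p k
    obtain ⟨hr, hcol⟩ := (mem_cyc_K33 k.1).1 k.2
    have r0 := z2_third _ _ _ (hr 0)
    have r1 := z2_third _ _ _ (hr 1)
    have c0 := z2_third _ _ _ (hcol 0)
    have c1 := z2_third _ _ _ (hcol 1)
    have c2 := z2_third _ _ _ (hcol 2)
    obtain ⟨i, j⟩ := p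
    fin_cases i <;> fin_cases j <;> simp [gridV, hw, dualVec, r0, r1, c0, c1, c2]
  rw [h1.2.2, hg, grid_indep hLI]

theorem iso_of_labels {α β ι : Type*} {M : Matroid α} {N : Matroid β} (g : ι → α) (gN : ι → β)
    (hg : Function.Injective g) (hgN : Function.Injective gN) (hr : range g = M.E)
    (hrN : range gN = N.E) (h : ∀ I : Set ι, M.Indep (g '' I) ↔ N.Indep (gN '' I)) :
    MatroidIso M N := by
  let e1 : ι ≃ M.E := (Equiv.ofInjective g hg).trans (Equiv.setCongr hr)
  let e2 : ι ≃ N.E := (Equiv.ofInjective gN hgN).trans (Equiv.setCongr hrN)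
  have he1 : ∀ i, (e1 i : α) = g i := fun i => rfl
  have he2 : ∀ i, (e2 i : β) = gN i := fun i => rfl
  refine ⟨e1.symm.trans e2, fun I => ?_⟩
  have := h (e1 ⁻¹' I)
  have i1 : g '' (e1 ⁻¹' I) = Subtype.val '' I := by
    have : g = Subtype.val ∘ e1 := funext fun i => (he1 i).symm
    rw [this, image_comp, e1.image_preimage]
  have i2 : gN '' (e1 ⁻¹' I) = Subtype.val '' ((e1.symm.trans e2) '' I) := by
    have : gN = Subtype.val ∘ e2 := funext fun i => (he2 i).symm
    rw [this, image_comp]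
    congr 1
    ext y
    simp only [mem_image, mem_preimage]
    constructor
    · rintro ⟨i, hi, rfl⟩
      exact ⟨e1 i, hi, by simp⟩
    · rintro ⟨x, hx, rfl⟩
      exact ⟨e1.symm x, by simpa using hx, rfl⟩
  rw [i1, i2] at this
  exact this

theorem indep_dual_labels {α β ι : Type*} {M : Matroid α} {N : Matroid β} (g : ι → α) (gN : ι → β)
    (hg : Function.Injective g) (hgN : Function.Injective gN) (hr : range g = M.E)
    (hrN : range gN = N.E) (h : ∀ I : Set ι, M.Indep (g '' I) ↔ N.Indep (gN '' I)) (I : Set ι)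
    (hI : M✶.Indep (g '' I)) : N✶.Indep (gN '' I) := by
  rw [dual_indep_iff_exists (hr ▸ image_subset_range g I)] at hI
  rw [dual_indep_iff_exists (hrN ▸ image_subset_range gN I)]
  obtain ⟨B, hB, hd⟩ := hI
  have hgB : g '' (g ⁻¹' B) = B := image_preimage_of_sub hr hB.subset_ground
  refine ⟨gN '' (g ⁻¹' B), ?_, ?_⟩
  · rw [isBase_iff_maximal_indep, maximal_subset_iff]
    refine ⟨(h _).1 (by rw [hgB]; exact hB.indep), fun J hJ hBJ => ?_⟩
    have hgJ : gN '' (gN ⁻¹' J) = J := image_preimage_of_sub hrN hJ.subset_ground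
    have h1 : M.Indep (g '' (gN ⁻¹' J)) := (h _).2 (by rw [hgJ]; exact hJ)
    have h2 : B ⊆ g '' (gN ⁻¹' J) := by
      rw [← hgB]
      exact image_mono (image_subset_iff.1 hBJ)
    have h3 := hB.eq_of_subset_indep h1 h2
    rw [← hgJ, h3, preimage_image_eq _ hg]
  · rw [disjoint_image_iff hgN]
    rw [← hgB, disjoint_image_iff hg] at hd
    exact hd

/-- Every internally 4-connected binary matroid with exactly 9 elements is isomorphic to
`M(K_{3,3})` or its dual. -/
theorem statement16 {α : Type*} (M : Matroid α) (hb : mBinary M) (h9 : M.E.ncard = 9)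
    (h4 : mInternally4 M)
    (N : Matroid (Sym2 (Fin 3 ⊕ Fin 3)))
    (hN : IsCycleMatroidOf N (completeBipartiteGraph (Fin 3) (Fin 3))) :
    MatroidIso M N ∨ MatroidIso M N✶ := by
  obtain ⟨n, v, hv⟩ := hb
  have hE : M.E.Finite := Set.finite_of_ncard_ne_zero (by omega)
  have : Fintype M.E := hE.fintype
  have hrep : IRep M (Subtype.val : M.E → α) (v ∘ Subtype.val) :=
    iRep_of_binRep hv _ Subtype.val_injective Subtype.range_val
  have hEN : range edgeL = N.E := edgeL_range.trans hN.1.symm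
  have hsum := mRk_dual_ground hE
  rcases Nat.le_or_le (mRk M M.E) 4 with hr | hr
  · right
    obtain ⟨e, a, b, c, d, hLI, hM⟩ := lowrank hrep h9 h4 hr
    refine iso_of_labels _ edgeL hM.1 edgeL_inj hM.2.1 hEN fun I => ?_
    rw [hM.2.2, grid_indep hLI, K33_dual N hN]
  · by_cases hr4 : mRk M✶ M✶.E ≤ 4
    · left
      obtain ⟨e, a, b, c, d, hLI, hM⟩ := lowrank (iRep_dual hrep) h9 (int4_dual hE h4) hr4
      have hd : ∀ I, M✶.Indep (_ '' I) ↔ N✶.Indep (edgeL '' I) := fun I => by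
        rw [hM.2.2, grid_indep hLI, K33_dual N hN]
      refine iso_of_labels _ edgeL hM.1 edgeL_inj hM.2.1 hEN fun I => ?_
      have k1 := indep_dual_labels (M := M✶) (N := N✶) _ edgeL hM.1 edgeL_inj hM.2.1 hEN hd I
      have k2 := indep_dual_labels (M := N✶) (N := M✶) edgeL _ edgeL_inj hM.1 hEN hM.2.1
        (fun J => (hd J).symm) I
      rw [dual_dual, dual_dual] at k1 k2
      exact ⟨k1, k2⟩
    · right
      obtain ⟨e, a, b, c, d, hLI, hM⟩ := lowrank hrep h9 h4 (by omega)
      refine iso_of_labels _ edgeL hM.1 edgeL_inj hM.2.1 hEN fun I => ?_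
      rw [hM.2.2, grid_indep hLI, K33_dual N hN]
end

section
/- The triangular Möbius matroid Δ_{n+1} with the element γ deleted is isomorphic to the dual of the cycle matroid of the cubic Möbius ladder on 2n vertices: Δ_{n+1} \ γ ≅ M*(CML_{2n}). -/
open Set Matroid
open scoped Classical

/-- The graph `G⁺_{n+2}`: an `n`-cycle on `Sum.inl '' (ZMod n)`, with `x = inl 0` and
`y = inl 1` adjacent on the cycle, together with two vertices `u = inr false` and
`w = inr true` adjacent to every cycle vertex, and the edge `γ = uw`. -/
def gplus (n : ℕ) : SimpleGraph (ZMod n ⊕ Bool) :=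
  SimpleGraph.fromRel (fun a b =>
    (∃ i : ZMod n, a = Sum.inl i ∧ b = Sum.inl (i + 1)) ∨
    (∃ i : ZMod n, a = Sum.inl i ∧ (b = Sum.inr true ∨ b = Sum.inr false)) ∨
    (a = Sum.inr false ∧ b = Sum.inr true))

/-- The ground set of the triangular Möbius matroid `Δ_{n+1}`: the edges of `G⁺_{n+2}`
other than `xy`, together with one new element. -/
def deltaGround (n : ℕ) : Set (Sym2 (ZMod n ⊕ Bool) ⊕ Unit) :=
  (Sum.inl '' ((gplus n).edgeSet \ {s(Sum.inl 0, Sum.inl 1)})) ∪ {Sum.inr ()}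

/-- The binary representation of `Δ_{n+1}`: edges of `G⁺_{n+2}` get their GF(2) incidence
vectors, and the new element is represented by `incVec (wx) + incVec (uy)`, so that it forms
a circuit with `{wx, uy}` (equivalently with `{ux, wy}`). -/
noncomputable def deltaVec (n : ℕ) : Sym2 (ZMod n ⊕ Bool) ⊕ Unit → ((ZMod n ⊕ Bool) → ZMod 2) :=
  Sum.elim incVec
    (fun _ => incVec s((Sum.inr true : ZMod n ⊕ Bool), Sum.inl 0) +
      incVec s((Sum.inr false : ZMod n ⊕ Bool), Sum.inl 1))

lemma indep_image_iff {ι α W : Type*} [Fintype ι] [AddCommGroup W] [Module (ZMod 2) W]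
    (g : ι → α) (hg : Function.Injective g) (v : α → W) (J : Set ι) :
    LinearIndependent (ZMod 2) (fun x : (g '' J : Set α) => v x) ↔
      ∀ a : ι → ZMod 2, (∀ i, i ∉ J → a i = 0) → ∑ i, a i • v (g i) = 0 → a = 0 := by
  have h1 : LinearIndependent (ZMod 2) (fun x : (g '' J : Set α) => v x) ↔
      LinearIndependent (ZMod 2) (fun x : J => v (g x)) :=
    (linearIndependent_equiv' (Equiv.Set.image g J hg) (by ext x; rfl)).symm
  rw [h1, Fintype.linearIndependent_iff]
  have hs : ∀ a : ι → ZMod 2, (∀ i, i ∉ J → a i = 0) →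
      ∑ i, a i • v (g i) = ∑ x : J, a x • v (g x) := by
    intro a ha
    rw [← Finset.sum_subtype (Finset.univ.filter (· ∈ J)) (by simp) (fun i => a i • v (g i)),
      Finset.sum_filter]
    refine Finset.sum_congr rfl fun i _ => ?_
    by_cases hi : i ∈ J
    · simp [hi]
    · simp [hi, ha i hi]
  constructor
  · intro h a ha h0
    rw [hs a ha] at h0
    funext i
    by_cases hi : i ∈ J
    · exact h (fun x => a x) h0 ⟨i, hi⟩
    · exact ha i hi
  · intro h b hb x
    have := h (fun i => if hi : i ∈ J then b ⟨i, hi⟩ else 0) (by intro i hi; simp [hi])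
      (by rw [hs _ (by intro i hi; simp [hi])]; simpa using hb)
    simpa using congrFun this x

theorem dual_key {ι α β W U : Type*} [Fintype ι] [AddCommGroup W] [Module (ZMod 2) W]
    [AddCommGroup U] [Module (ZMod 2) U]
    (M : Matroid α) (v : α → W) (N : Matroid β) (w : β → U) (g : ι → α) (f : ι → β)
    (hg : Function.Injective g) (hf : Function.Injective f)
    (hM : IsBinRepOn M (range g) v) (hN : IsBinRepOn N (range f) w)
    (hK : ∀ a : ι → ZMod 2, ∑ i, a i • v (g i) = 0 ↔
      ∃ φ : U →ₗ[ZMod 2] ZMod 2, ∀ i, a i = φ (w (f i))) :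
    MatroidIso M N✶ := by
  have main : ∀ J : Set ι, M.Indep (g '' J) ↔ N✶.Indep (f '' J) := by
    intro J
    rw [hM.2 _ (image_subset_range _ _), indep_image_iff g hg, dual_indep_iff_exists']
    have ins : ∀ B ⊆ range f, ∀ e ∈ range f, e ∉ B → N.Indep B → 
        (N.Indep (insert e B) ↔ w e ∉ Submodule.span (ZMod 2) (w '' B)) := by
      intro B hB e he heB hBi
      rw [hN.2 _ (insert_subset he hB)]
      rw [hN.2 _ hB] at hBi
      have := linearIndepOn_insert (K := ZMod 2) (f := w) heB
      exact this.trans (and_iff_right hBi)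
    constructor
    · intro h
      refine ⟨by rw [hN.1]; exact image_subset_range _ _, ?_⟩
      obtain ⟨B, hB⟩ := N.exists_isBasis (range f \ f '' J) (by rw [hN.1]; exact sdiff_subset)
      have hBf : B ⊆ range f := hB.subset.trans sdiff_subset
      refine ⟨B, hB.indep.isBase_of_forall_insert ?_, ?_⟩
      · rintro e ⟨he, heB⟩ hi
        rw [hN.1] at he
        rw [ins B hBf e he heB hB.indep] at hi
        obtain ⟨φ, hφ, hk⟩ := Submodule.exists_le_ker_of_notMem hi
        obtain ⟨i, rfl⟩ := he
        have := h (fun i => φ (w (f i))) ?_ ((hK _).2 ⟨φ, fun _ => rfl⟩)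
        · exact hφ (congrFun this i)
        · intro j hj
          refine hk ?_
          by_cases hjB : f j ∈ B
          · exact Submodule.subset_span ⟨_, hjB, rfl⟩
          · by_contra hc
            rw [← ins B hBf (f j) ⟨j, rfl⟩ hjB hB.indep] at hc
            have hm : f j ∈ range f \ f '' J := ⟨⟨j, rfl⟩, by rwa [hf.mem_set_image]⟩
            exact hjB (hB.mem_of_insert_indep hm hc)
      · exact (subset_sdiff.1 hB.subset).2.symm
    · rintro ⟨-, B, hB, hd⟩ a ha h0
      obtain ⟨φ, hφ⟩ := (hK a).1 h0
      have hBf : B ⊆ range f := by rw [← hN.1]; exact hB.subset_ground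
      have hk : Submodule.span (ZMod 2) (w '' B) ≤ LinearMap.ker φ := by
        rw [Submodule.span_le]
        rintro _ ⟨b, hb, rfl⟩
        obtain ⟨i, rfl⟩ := hBf hb
        have : i ∉ J := fun hi => Set.disjoint_left.1 hd ⟨i, hi, rfl⟩ hb
        simpa [ha i this] using (hφ i).symm
      funext i
      rw [hφ]
      refine hk ?_
      by_cases hjB : f i ∈ B
      · exact Submodule.subset_span ⟨_, hjB, rfl⟩
      · by_contra hc
        rw [← ins B hBf (f i) ⟨i, rfl⟩ hjB hB.indep] at hc
        exact hjB (hB.mem_of_insert_indep hc)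
  let eg : ι ≃ M.E := (Equiv.ofInjective g hg).trans (Equiv.setCongr hM.1.symm)
  let ef : ι ≃ N✶.E := (Equiv.ofInjective f hf).trans (Equiv.setCongr hN.1.symm)
  refine ⟨eg.symm.trans ef, fun I => ?_⟩
  obtain ⟨J, rfl⟩ : ∃ J, eg '' J = I := ⟨eg.symm '' I, by simp⟩
  have e1 : Subtype.val '' (eg '' J) = g '' J := by rw [image_image]; rfl
  have e2 : Subtype.val '' ((eg.symm.trans ef) '' (eg '' J)) = f '' J := by
    simp only [image_image, Equiv.trans_apply, Equiv.symm_apply_apply]; rfl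
  rw [e1, e2]
  exact main J

/-- Indexing of the elements of `Δ_{n+1} \ γ`. -/
def gMap (n : ℕ) : ZMod n ⊕ ZMod n ⊕ ZMod n → Sym2 (ZMod n ⊕ Bool) ⊕ Unit
  | Sum.inl i => Sum.inl s(Sum.inl (i + 1), Sum.inr false)
  | Sum.inr (Sum.inl i) => Sum.inl s(Sum.inl (i + 1), Sum.inr true)
  | Sum.inr (Sum.inr i) =>
      if i = 0 then Sum.inr () else Sum.inl s(Sum.inl i, Sum.inl (i + 1))

/-- Indexing of the edges of the cubic Möbius ladder. -/
def fMap (n : ℕ) : ZMod n ⊕ ZMod n ⊕ ZMod n → Sym2 (ZMod (2 * n))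
  | Sum.inl i => s(((i.val : ℕ) : ZMod (2 * n)), ((i.val + 1 : ℕ) : ZMod (2 * n)))
  | Sum.inr (Sum.inl i) => s(((n + i.val : ℕ) : ZMod (2 * n)), ((n + i.val + 1 : ℕ) : ZMod (2 * n)))
  | Sum.inr (Sum.inr i) => s(((i.val : ℕ) : ZMod (2 * n)), ((n + i.val : ℕ) : ZMod (2 * n)))

lemma cast_cases {n a b : ℕ} (ha : a < 4 * n) (hb : b < 4 * n)
    (h : (a : ZMod (2 * n)) = b) : a = b ∨ a = b + 2 * n ∨ b = a + 2 * n := by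
  rw [ZMod.natCast_eq_natCast_iff] at h
  rcases le_total a b with hab | hab
  · obtain ⟨k, hk⟩ := (Nat.modEq_iff_dvd' hab).1 h
    have : k < 2 := by
      by_contra hc
      have : 2 * n * 2 ≤ 2 * n * k := Nat.mul_le_mul_left _ (by omega)
      omega
    interval_cases k <;> omega
  · obtain ⟨k, hk⟩ := (Nat.modEq_iff_dvd' hab).1 h.symm
    have : k < 2 := by
      by_contra hc
      have : 2 * n * 2 ≤ 2 * n * k := Nat.mul_le_mul_left _ (by omega)
      omega
    interval_cases k <;> omega

lemma two_ne {n : ℕ} (hn : 3 ≤ n) : (2 : ZMod n) ≠ 0 := by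
  intro h
  have h2 : ((2 : ℕ) : ZMod n) = 0 := by exact_mod_cast h
  rw [ZMod.natCast_eq_zero_iff] at h2
  have := Nat.le_of_dvd (by norm_num) h2
  omega

lemma one_ne {n : ℕ} (hn : 3 ≤ n) : (1 : ZMod n) ≠ 0 := by
  intro h
  have h2 : ((1 : ℕ) : ZMod n) = 0 := by exact_mod_cast h
  rw [ZMod.natCast_eq_zero_iff] at h2
  have := Nat.le_of_dvd (by norm_num) h2
  omega

lemma fMap_inj {n : ℕ} (hn : 3 ≤ n) : Function.Injective (fMap n) := by
  have : NeZero n := ⟨by omega⟩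
  have key : ∀ {a b c d : ℕ}, a < 4 * n → b < 4 * n → c < 4 * n → d < 4 * n →
      s((a : ZMod (2 * n)), (b : ZMod (2 * n))) = s((c : ZMod (2 * n)), (d : ZMod (2 * n))) →
      ((a = c ∨ a = c + 2 * n ∨ c = a + 2 * n) ∧ (b = d ∨ b = d + 2 * n ∨ d = b + 2 * n)) ∨
      ((a = d ∨ a = d + 2 * n ∨ d = a + 2 * n) ∧ (b = c ∨ b = c + 2 * n ∨ c = b + 2 * n)) := by
    intro a b c d ha hb hc hd h
    rw [Sym2.eq_iff] at h
    rcases h with ⟨h1, h2⟩ | ⟨h1, h2⟩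
    · exact Or.inl ⟨cast_cases ha hc h1, cast_cases hb hd h2⟩
    · exact Or.inr ⟨cast_cases ha hd h1, cast_cases hb hc h2⟩
  rintro (i | i | i) (j | j | j) h <;> have hi := ZMod.val_lt i <;> have hj := ZMod.val_lt j <;>
    have h := key (by omega) (by omega) (by omega) (by omega) h
  · rw [ZMod.val_injective n (by omega : i.val = j.val)]
  · omega
  · omega
  · omega
  · rw [ZMod.val_injective n (by omega : i.val = j.val)]
  · omega
  · omega
  · omega
  · rw [ZMod.val_injective n (by omega : i.val = j.val)]

lemma fMap_range {n : ℕ} (hn : 3 ≤ n) : range (fMap n) = (cml n).edgeSet := by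
  have : NeZero n := ⟨by omega⟩
  have : NeZero (2 * n) := ⟨by omega⟩
  have h2n : ((2 * n : ℕ) : ZMod (2 * n)) = 0 := ZMod.natCast_self _
  have step : ∀ a : ZMod (2 * n), s(a, a + 1) ∈ range (fMap n) := by
    intro a
    have ha := ZMod.val_lt a
    by_cases h : a.val < n
    · refine ⟨Sum.inl (a.val : ZMod n), ?_⟩
      simp only [fMap, ZMod.val_natCast, Nat.mod_eq_of_lt h]
      simp
    · have h' : a.val - n < n := by omega
      refine ⟨Sum.inr (Sum.inl ((a.val - n : ℕ) : ZMod n)), ?_⟩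
      simp only [fMap, ZMod.val_natCast, Nat.mod_eq_of_lt h']
      rw [show n + (a.val - n) = a.val by omega]
      simp
  have step2 : ∀ a : ZMod (2 * n), s(a, a + n) ∈ range (fMap n) := by
    intro a
    have ha := ZMod.val_lt a
    by_cases h : a.val < n
    · refine ⟨Sum.inr (Sum.inr (a.val : ZMod n)), ?_⟩
      simp only [fMap, ZMod.val_natCast, Nat.mod_eq_of_lt h]
      simp [add_comm]
    · have h' : a.val - n < n := by omega
      refine ⟨Sum.inr (Sum.inr ((a.val - n : ℕ) : ZMod n)), ?_⟩
      simp only [fMap, ZMod.val_natCast, Nat.mod_eq_of_lt h']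
      rw [show n + (a.val - n) = a.val by omega, Sym2.eq_swap]
      have e : ((a.val - n : ℕ) : ZMod (2 * n)) = a + n := by
        have : ((a.val - n + 2 * n : ℕ) : ZMod (2 * n)) = ((a.val + n : ℕ) : ZMod (2 * n)) := by
          congr 1; omega
        rw [Nat.cast_add, h2n, add_zero] at this
        simpa using this
      rw [e]; simp
  have ne : ∀ {a b : ℕ}, a < b → b < a + 2 * n → (a : ZMod (2 * n)) ≠ b := by
    intro a b h1 h2 h
    rw [ZMod.natCast_eq_natCast_iff] at h
    have := (Nat.modEq_iff_dvd' h1.le).1 h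
    have := Nat.le_of_dvd (by omega) this
    omega
  ext e
  constructor
  · rintro ⟨i | i | i, rfl⟩ <;>
      simp only [fMap, SimpleGraph.mem_edgeSet, cml, SimpleGraph.circulantGraph,
        SimpleGraph.fromRel_adj]
    · exact ⟨ne (by omega) (by omega), Or.inr (by simp)⟩
    · exact ⟨ne (by omega) (by omega), Or.inr (by simp)⟩
    · exact ⟨ne (by omega) (by omega), Or.inr (by simp)⟩
  · induction e using Sym2.ind with
    | _ a b =>
      simp only [SimpleGraph.mem_edgeSet, cml, SimpleGraph.circulantGraph,
        SimpleGraph.fromRel_adj, mem_insert_iff, mem_singleton_iff]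
      rintro ⟨-, (h | h) | (h | h)⟩
      · rw [sub_eq_iff_eq_add'.1 h, Sym2.eq_swap]; exact step b
      · rw [sub_eq_iff_eq_add'.1 h, Sym2.eq_swap]; exact step2 b
      · rw [sub_eq_iff_eq_add'.1 h]; exact step a
      · rw [sub_eq_iff_eq_add'.1 h]; exact step2 a

lemma gMap_inj {n : ℕ} (hn : 3 ≤ n) : Function.Injective (gMap n) := by
  have h2 := two_ne hn
  rintro (i | i | i) (j | j | j) h <;> simp only [gMap] at h
  · simpa using h
  · simp at h
  · split_ifs at h; simp at h
  · simp at h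
  · simpa using h
  · split_ifs at h; simp at h
  · split_ifs at h; simp at h
  · split_ifs at h; simp at h
  · split_ifs at h with h1 h3 h3
    · rw [h1, h3]
    · simp only [Sum.inl.injEq, Sym2.eq_iff] at h
      rcases h with ⟨h, -⟩ | ⟨h, h'⟩
      · rw [h]
      · exact absurd (by linear_combination h' - h) h2

lemma gMap_range {n : ℕ} (hn : 3 ≤ n) : range (gMap n) = deltaGround n \
    {Sum.inl s((Sum.inr false : ZMod n ⊕ Bool), Sum.inr true)} := by
  have h2 := two_ne hn
  have h1 := one_ne hn
  ext e
  constructor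
  · rintro ⟨i | i | i, rfl⟩
    · simp [gMap, deltaGround, gplus]
    · simp [gMap, deltaGround, gplus]
    · by_cases hi : i = 0
      · simp [gMap, deltaGround, hi]
      · simp only [gMap, hi, if_false]
        refine ⟨Or.inl ⟨_, ⟨?_, ?_⟩, rfl⟩, by simp⟩
        · simp [gplus, h1]
        · simp only [mem_singleton_iff, Sym2.eq_iff, Sum.inl.injEq]
          rintro (⟨h, -⟩ | ⟨h, h'⟩)
          · exact hi h
          · exact h2 (by linear_combination h' - h)
  · rintro ⟨⟨e, ⟨he, hne⟩, rfl⟩ | he, hγ⟩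
    · have cyc : ∀ i : ZMod n, s((Sum.inl i : ZMod n ⊕ Bool), Sum.inl (i + 1)) ≠ s(Sum.inl 0, Sum.inl 1) →
          Sum.inl s((Sum.inl i : ZMod n ⊕ Bool), Sum.inl (i + 1)) ∈ range (gMap n) := by
        intro i h
        have hi : i ≠ 0 := by rintro rfl; simp at h
        exact ⟨Sum.inr (Sum.inr i), by simp [gMap, hi]⟩
      have sp : ∀ (i : ZMod n) (b : Bool), 
          Sum.inl s((Sum.inl i : ZMod n ⊕ Bool), Sum.inr b) ∈ range (gMap n) := by
        rintro i (_ | _)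
        · exact ⟨Sum.inl (i - 1), by simp [gMap]⟩
        · exact ⟨Sum.inr (Sum.inl (i - 1)), by simp [gMap]⟩
      induction e using Sym2.ind with
      | _ a b =>
        simp only [SimpleGraph.mem_edgeSet, gplus, SimpleGraph.fromRel_adj] at he
        obtain ⟨-, h⟩ := he
        have main : ∀ a b : ZMod n ⊕ Bool, ((∃ i : ZMod n, a = Sum.inl i ∧ b = Sum.inl (i + 1)) ∨
            (∃ i : ZMod n, a = Sum.inl i ∧ (b = Sum.inr true ∨ b = Sum.inr false)) ∨
            (a = Sum.inr false ∧ b = Sum.inr true)) → s(a, b) ≠ s(Sum.inl 0, Sum.inl 1) →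
            (Sum.inl s(a, b) : Sym2 (ZMod n ⊕ Bool) ⊕ Unit) ≠ Sum.inl s(Sum.inr false, Sum.inr true) →
            Sum.inl s(a, b) ∈ range (gMap n) := by
          rintro a b (⟨i, rfl, rfl⟩ | ⟨i, rfl, rfl | rfl⟩ | ⟨rfl, rfl⟩) h3 h4
          · exact cyc i h3
          · exact sp i _
          · exact sp i _
          · exact absurd rfl h4
        rcases h with h | h
        · exact main a b h hne hγ
        · rw [Sym2.eq_swap (a := a)] at hne hγ ⊢
          exact main b a h hne hγ
    · obtain rfl := he
      exact ⟨Sum.inr (Sum.inr 0), by simp [gMap]⟩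

lemma sum_zmod {n : ℕ} [NeZero n] (F : ZMod n → ZMod 2) :
    ∑ i, F i = ∑ k ∈ Finset.range n, F (k : ZMod n) := by
  refine (Finset.sum_bij (fun (k : ℕ) _ => (k : ZMod n)) ?_ ?_ ?_ ?_).symm
  · simp
  · intro a ha b hb h
    have := congrArg ZMod.val h
    simpa [ZMod.val_natCast, Nat.mod_eq_of_lt (Finset.mem_range.1 ha),
      Nat.mod_eq_of_lt (Finset.mem_range.1 hb)] using this
  · intro i _
    exact ⟨i.val, Finset.mem_range.2 (ZMod.val_lt i), by simp⟩
  · simp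

lemma incVec_mk {V : Type*} [DecidableEq V] {x y : V} (h : x ≠ y) :
    incVec s(x, y) = Pi.single x 1 + Pi.single y 1 := by
  funext z
  by_cases hx : z = x
  · subst hx; simp [incVec, h]
  · by_cases hy : z = y
    · subst hy; simp [incVec, hx]
    · simp [incVec, hx, hy]

/-- The cycle space of `Δ_{n+1} \ γ` in coordinates. -/
lemma delta_ker {n : ℕ} (hn : 3 ≤ n) [NeZero n] (a : ZMod n ⊕ ZMod n ⊕ ZMod n → ZMod 2) :
    ∑ i, a i • deltaVec n (gMap n i) = 0 ↔
      (∀ i, a (.inl i) + a (.inr (.inl i)) + a (.inr (.inr i)) + a (.inr (.inr (i + 1))) = 0) ∧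
      (∑ i, a (.inl i) = a (.inr (.inr 0))) ∧ (∑ i, a (.inr (.inl i)) = a (.inr (.inr 0))) := by
  have h1 := one_ne hn
  have two : ∀ x : ZMod 2, x + x = 0 := by decide
  have U : ∀ i, deltaVec n (gMap n (.inl i)) =
      Pi.single (.inl (i + 1)) 1 + Pi.single (.inr false) 1 := by
    intro i; simp [deltaVec, gMap, incVec_mk]
  have Wv : ∀ i, deltaVec n (gMap n (.inr (.inl i))) =
      Pi.single (.inl (i + 1)) 1 + Pi.single (.inr true) 1 := by
    intro i; simp [deltaVec, gMap, incVec_mk]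
  have R : ∀ i, deltaVec n (gMap n (.inr (.inr i))) =
      Pi.single (.inl i) 1 + Pi.single (.inl (i + 1)) 1 +
        (if i = 0 then Pi.single (.inr false) 1 + Pi.single (.inr true) 1 else 0) := by
    intro i
    by_cases hi : i = 0
    · subst hi
      simp only [gMap, if_true, deltaVec, Sum.elim_inr, zero_add]
      rw [incVec_mk (by simp), incVec_mk (by simp)]
      abel
    · simp [deltaVec, gMap, hi, incVec_mk, h1]
  have c1 : ∀ j : ZMod n, (∑ i, a i • deltaVec n (gMap n i)) (.inl (j + 1)) =
      a (.inl j) + a (.inr (.inl j)) + a (.inr (.inr j)) + a (.inr (.inr (j + 1))) := by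
    intro j
    simp only [Fintype.sum_sum_type, U, Wv, R, Pi.add_apply, Finset.sum_apply, Pi.smul_apply,
      Pi.single_apply, Sum.inl.injEq, add_left_inj, smul_eq_mul, mul_add, Finset.sum_add_distrib,
      mul_ite, mul_one, mul_zero, Finset.sum_ite_eq, Finset.mem_univ, if_true, reduceCtorEq, if_false,
      Finset.sum_const_zero, add_zero]
    have : ∀ i : ZMod n, a (.inr (.inr i)) * (if i = 0 then Pi.single (.inr false) 1 + Pi.single (.inr true) 1 else (0 : ZMod n ⊕ Bool → ZMod 2)) (.inl (j + 1)) = 0 := by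
      intro i; split_ifs <;> simp
    simp only [this, Finset.sum_const_zero]
    ring
  have c2 : (∑ i, a i • deltaVec n (gMap n i)) (.inr false) =
      ∑ i, a (.inl i) + a (.inr (.inr 0)) := by
    have : ∀ i : ZMod n, (if i = 0 then Pi.single (.inr false) 1 + Pi.single (.inr true) 1 else (0 : ZMod n ⊕ Bool → ZMod 2)) (.inr false) = if i = 0 then 1 else 0 := by
      intro i; split_ifs <;> simp
    simp [Fintype.sum_sum_type, U, Wv, R, Finset.sum_apply, this]
  have c3 : (∑ i, a i • deltaVec n (gMap n i)) (.inr true) =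
      ∑ i, a (.inr (.inl i)) + a (.inr (.inr 0)) := by
    have : ∀ i : ZMod n, (if i = 0 then Pi.single (.inr false) 1 + Pi.single (.inr true) 1 else (0 : ZMod n ⊕ Bool → ZMod 2)) (.inr true) = if i = 0 then 1 else 0 := by
      intro i; split_ifs <;> simp
    simp [Fintype.sum_sum_type, U, Wv, R, Finset.sum_apply, this]
  constructor
  · intro h
    rw [h] at c1 c2 c3
    refine ⟨fun i => (c1 i).symm, ?_, ?_⟩
    · exact CharTwo.add_eq_zero.1 c2.symm
    · exact CharTwo.add_eq_zero.1 c3.symm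
  · rintro ⟨h, h', h''⟩
    funext x
    rcases x with j | _ | _
    · have := c1 (j - 1)
      rw [h] at this
      simpa using this
    · rw [c2, h', two]; rfl
    · rw [c3, h'', two]; rfl

lemma fMap_dual {n : ℕ} (hn : 3 ≤ n) (φ : (ZMod (2 * n) → ZMod 2) →ₗ[ZMod 2] ZMod 2)
    {a b : ℕ} (h1 : a < b) (h2 : b < a + 2 * n) :
    φ (incVec s((a : ZMod (2 * n)), (b : ZMod (2 * n)))) =
      φ (Pi.single (a : ZMod (2 * n)) 1) + φ (Pi.single (b : ZMod (2 * n)) 1) := by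
  rw [incVec_mk, map_add]
  intro h
  rw [ZMod.natCast_eq_natCast_iff] at h
  have := (Nat.modEq_iff_dvd' h1.le).1 h
  have := Nat.le_of_dvd (by omega) this
  omega

lemma cut_iff {n : ℕ} (hn : 3 ≤ n) [NeZero n] (a : ZMod n ⊕ ZMod n ⊕ ZMod n → ZMod 2) :
    ∑ i, a i • deltaVec n (gMap n i) = 0 ↔
      ∃ φ : (ZMod (2 * n) → ZMod 2) →ₗ[ZMod 2] ZMod 2, ∀ i, a i = φ (incVec (fMap n i)) := by
  have : NeZero (2 * n) := ⟨by omega⟩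
  have two : ∀ x : ZMod 2, x + x = 0 := by decide
  -- the condition on `φ` in terms of a potential on naturals
  have hφ : ∀ φ : (ZMod (2 * n) → ZMod 2) →ₗ[ZMod 2] ZMod 2,
      (∀ i, a i = φ (incVec (fMap n i))) ↔ 
      ∀ k < n, 
        a (.inl (k : ZMod n)) = φ (Pi.single (k : ZMod (2 * n)) 1) + φ (Pi.single ((k + 1 : ℕ) : ZMod (2 * n)) 1) ∧
        a (.inr (.inl (k : ZMod n))) = φ (Pi.single ((n + k : ℕ) : ZMod (2 * n)) 1) + φ (Pi.single ((n + k + 1 : ℕ) : ZMod (2 * n)) 1) ∧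
        a (.inr (.inr (k : ZMod n))) = φ (Pi.single (k : ZMod (2 * n)) 1) + φ (Pi.single ((n + k : ℕ) : ZMod (2 * n)) 1) := by
    intro φ
    constructor
    · intro h k hk
      have hv : (k : ZMod n).val = k := by rw [ZMod.val_natCast, Nat.mod_eq_of_lt hk]
      refine ⟨?_, ?_, ?_⟩ <;> rw [h] <;> simp only [fMap, hv] <;>
        exact fMap_dual hn φ (by omega) (by omega)
    · intro h i
      rcases i with i | i | i <;> obtain ⟨h1, h2, h3⟩ := h i.val (ZMod.val_lt i) <;>
        simp only [ZMod.natCast_zmod_val] at h1 h2 h3 <;> simp only [fMap]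
      · rw [h1]; exact (fMap_dual hn φ (by omega) (by omega)).symm
      · rw [h2]; exact (fMap_dual hn φ (by omega) (by omega)).symm
      · rw [h3]; exact (fMap_dual hn φ (by omega) (by omega)).symm
  rw [delta_ker hn]
  simp_rw [hφ]
  have h2n : ((n + n : ℕ) : ZMod (2 * n)) = ((0 : ℕ) : ZMod (2 * n)) := by
    rw [← two_mul, ZMod.natCast_self, Nat.cast_zero]
  constructor
  · rintro ⟨hv, hu, hw⟩
    rw [sum_zmod] at hu hw
    set A : ℕ → ZMod 2 := fun k => ∑ j ∈ Finset.range k, a (.inl (j : ZMod n)) with hA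
    set B : ℕ → ZMod 2 := fun k => ∑ j ∈ Finset.range k, a (.inr (.inl (j : ZMod n))) with hB
    have hAn : A n = a (.inr (.inr 0)) := hu
    have hBn : B n = a (.inr (.inr 0)) := hw
    let P : ℕ → ZMod 2 := fun k => if k ≤ n then A k else A n + B (k - n)
    let φ : (ZMod (2 * n) → ZMod 2) →ₗ[ZMod 2] ZMod 2 :=
      ∑ x : ZMod (2 * n), P x.val • LinearMap.proj x
    have e0 : ∀ x : ZMod (2 * n), φ (Pi.single x 1) = P x.val := by
      intro x
      simp [φ, Pi.single_apply]
    have e1 : ∀ k ≤ n, φ (Pi.single ((k : ℕ) : ZMod (2 * n)) 1) = A k := by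
      intro k hk
      rw [e0, ZMod.val_natCast, Nat.mod_eq_of_lt (by omega)]
      simp [P, hk]
    have e2 : ∀ k ≤ n, φ (Pi.single ((n + k : ℕ) : ZMod (2 * n)) 1) = A n + B k := by
      intro k hk
      rcases Nat.lt_or_ge k n with hk' | hk'
      · rw [e0, ZMod.val_natCast, Nat.mod_eq_of_lt (by omega)]
        rcases Nat.eq_zero_or_pos k with rfl | hk0
        · simp [P, hB]
        · have : ¬ (n + k ≤ n) := by omega
          simp [P, this]
      · obtain rfl : k = n := by omega
        rw [h2n, e1 0 (by omega), hAn, hBn, two]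
        simp [hA]
    have hr : ∀ k : ℕ, a (.inr (.inr (k : ZMod n))) = A k + (A n + B k) := by
      intro k
      induction k with
      | zero => rw [hAn]; simp [hA, hB]
      | succ k ih =>
        have h1 : A (k + 1) = A k + a (.inl (k : ZMod n)) := Finset.sum_range_succ _ _
        have h2 : B (k + 1) = B k + a (.inr (.inl (k : ZMod n))) := Finset.sum_range_succ _ _
        have h3 := hv k
        rw [h1, h2, Nat.cast_succ]
        rw [ih] at h3
        rw [add_eq_zero_iff_eq_neg', CharTwo.neg_eq] at h3
        rw [h3]; ring
    refine ⟨φ, fun k hk => ⟨?_, ?_, ?_⟩⟩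
    · rw [e1 k hk.le, e1 (k + 1) hk]
      have h1 : A (k + 1) = A k + a (.inl (k : ZMod n)) := Finset.sum_range_succ _ _
      rw [h1, ← add_assoc, two, zero_add]
    · rw [add_assoc n k 1, e2 k hk.le, e2 (k + 1) hk]
      have h2 : B (k + 1) = B k + a (.inr (.inl (k : ZMod n))) := Finset.sum_range_succ _ _
      rw [h2]; linear_combination -two (A n) - two (B k)
    · rw [e1 k hk.le, e2 k hk.le, hr]
  · rintro ⟨φ, h⟩
    set p : ℕ → ZMod 2 := fun k => φ (Pi.single (k : ZMod (2 * n)) 1) with hp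
    have h : ∀ k < n, a (.inl (k : ZMod n)) = p k + p (k + 1) ∧
        a (.inr (.inl (k : ZMod n))) = p (n + k) + p (n + k + 1) ∧
        a (.inr (.inr (k : ZMod n))) = p k + p (n + k) := h
    have hpn : p (n + n) = p 0 := by simp only [hp, h2n]
    have h0 := (h 0 (by omega)).2.2
    have tel : ∀ (q : ℕ → ZMod 2) m, ∑ k ∈ Finset.range m, (q k + q (k + 1)) = q 0 + q m := by
      intro q m
      induction m with
      | zero => simp [two]
      | succ m ih => rw [Finset.sum_range_succ, ih]; linear_combination two (q m)
    rw [Nat.cast_zero] at h0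
    refine ⟨?_, ?_, ?_⟩
    · intro i
      obtain ⟨k, hk, rfl⟩ : ∃ k < n, (k : ZMod n) = i := ⟨i.val, ZMod.val_lt i, by simp⟩
      obtain ⟨h1, h2, h3⟩ := h k hk
      have h4 : a (.inr (.inr ((k : ZMod n) + 1))) = p (k + 1) + p (n + k + 1) := by
        rcases Nat.lt_or_ge (k + 1) n with hk' | hk'
        · have := (h (k + 1) hk').2.2
          rw [Nat.cast_succ] at this
          rw [this]; rfl
        · obtain rfl : n = k + 1 := by omega
          have : (k : ZMod (k + 1)) + 1 = 0 := by
            have := ZMod.natCast_self (k + 1)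
            rwa [Nat.cast_succ] at this
          rw [this, h0, add_assoc (k + 1) k 1, hpn, add_zero, add_comm]
      rw [h1, h2, h3, h4]
      linear_combination two (p k) + two (p (k + 1)) + two (p (n + k)) + two (p (n + k + 1))
    · rw [sum_zmod, Finset.sum_congr rfl fun k hk => (h k (Finset.mem_range.1 hk)).1, tel, h0]
      simp
    · rw [sum_zmod, Finset.sum_congr rfl fun k hk => (h k (Finset.mem_range.1 hk)).2.1]
      refine (tel (fun k => p (n + k)) n).trans ?_
      simp only [hpn, h0]
      rw [add_comm]

/-- `Δ_{n+1} \ γ` is isomorphic to `M*(CML_{2n})`, the dual of the cycle matroid of the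
cubic Möbius ladder on `2n` vertices. -/
theorem statement19 (n : ℕ) (hn : 3 ≤ n)
    (D : Matroid (Sym2 (ZMod n ⊕ Bool) ⊕ Unit))
    (hD : IsBinRepOn D (deltaGround n) (deltaVec n))
    (N : Matroid (Sym2 (ZMod (2 * n)))) (hN : IsCycleMatroidOf N (cml n)) :
    MatroidIso (mDel D {Sum.inl s((Sum.inr false : ZMod n ⊕ Bool), Sum.inr true)}) N✶ := by
  have : NeZero n := ⟨by omega⟩
  refine dual_key _ (deltaVec n) N incVec (gMap n) (fMap n) (gMap_inj hn) (fMap_inj hn) ?_ ?_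
    (cut_iff hn)
  · rw [gMap_range hn]
    refine ⟨?_, ?_⟩
    · simp [mDel, hD.1]
    · intro I hI
      rw [mDel, restrict_indep_iff, hD.1, hD.2 I (hI.trans sdiff_subset)]
      exact and_iff_left hI
  · rw [fMap_range hn]
    exact hN
end
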